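/- Let λ be an n-partition and π an n-permutation, and let s_{i_t}⋯s_{i_1} be any reduced word for π. Then the Demazure polynomial d_λ(π;x) = ρ_{i_t}⋯ρ_{i_1}·(x_1^{λ_1}⋯x_n^{λ_n}) equals the sum of the weight monomials x^T over all semistandard tableaux T of shape λ such that T(l,k) ∈ A_λ(T,π;l,k) for every box (l,k) of λ. -/

import Mathlib

/-
Common combinatorial set-up for "Tableaux for Key Polynomials, Demazure
Characters, and Atoms" (Proctor–Willis).

Conventions: a box `(j, i)` means column `j`, row `i`, both 1-indexed.
Partial (remnant) tableaux are encoded by their column-length functions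
`c : ℕ → ℕ` (each column of a remnant is a top segment of the original
column), together with the ambient value function `T : ℕ → ℕ → ℕ`.
-/

open scoped BigOperators Classical

noncomputable section

namespace KeyPoly

open MvPolynomial

/-- An `n`-partition `λ = (λ_1, …, λ_n)` with `λ_1 ≥ … ≥ λ_n ≥ 0`,
recorded as a function on `1, …, n`, vanishing beyond `n`. -/
structure NPartition (n : ℕ) where
  part : ℕ → ℕ
  antitone : ∀ ⦃i j : ℕ⦄, 1 ≤ i → i ≤ j → part j ≤ part i
  outside : ∀ i : ℕ, n < i → part i = 0

variable {n : ℕ}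

/-- The column length `ζ_j` of the Young diagram of `λ`. -/
def zeta (lam : NPartition n) (j : ℕ) : ℕ :=
  ((Finset.Icc 1 n).filter fun i => j ≤ lam.part i).card

/-- The box `(j,i)` (column `j`, row `i`) belongs to the diagram of `λ`. -/
def InShape (lam : NPartition n) (j i : ℕ) : Prop :=
  1 ≤ j ∧ 1 ≤ i ∧ i ≤ n ∧ j ≤ lam.part i

/-- The boxes of the diagram of `λ`, as a finite set of pairs (column, row). -/
def boxes (lam : NPartition n) : Finset (ℕ × ℕ) :=
  (Finset.Icc 1 (lam.part 1) ×ˢ Finset.Icc 1 n).filter fun b => b.1 ≤ lam.part b.2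

/-- `T` is a semistandard tableau of shape `λ` with values in `[1,n]`:
rows weakly increase eastward, columns strictly increase southward. -/
def IsSSYT (lam : NPartition n) (T : ℕ → ℕ → ℕ) : Prop :=
  (∀ j i, InShape lam j i → 1 ≤ T j i ∧ T j i ≤ n) ∧
  (∀ j i, InShape lam (j + 1) i → T j i ≤ T (j + 1) i) ∧
  (∀ j i, InShape lam j (i + 1) → T j i < T j (i + 1))

/-- Normalization: the filling vanishes outside the shape. -/
def ZeroOutside (lam : NPartition n) (T : ℕ → ℕ → ℕ) : Prop :=
  ∀ j i, ¬ InShape lam j i → T j i = 0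

/-- `T(l, k+1)`, with the boundary convention `n+1` when `k = ζ_l`. -/
def south (lam : NPartition n) (T : ℕ → ℕ → ℕ) (l k : ℕ) : ℕ :=
  if InShape lam l (k + 1) then T l (k + 1) else n + 1

/-- `T(l+1, k)`, with the boundary convention `n` when `l = λ_k`. -/
def east (lam : NPartition n) (T : ℕ → ℕ → ℕ) (l k : ℕ) : ℕ :=
  if InShape lam (l + 1) k then T (l + 1) k else n

/-- An `n`-permutation: a tuple `(p 1, …, p n)` of distinct entries from `[1,n]`. -/
def IsNPerm (n : ℕ) (p : ℕ → ℕ) : Prop :=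
  Set.BijOn p (Set.Icc 1 n) (Set.Icc 1 n)

/-- The `λ`-key `Y_λ(π)`: column `j` is `π_1, …, π_{ζ_j}` sorted increasingly
(from top to bottom); zero outside the shape. -/
def keyTab (lam : NPartition n) (p : ℕ → ℕ) (j i : ℕ) : ℕ :=
  if InShape lam j i then
    (((Finset.Icc 1 (zeta lam j)).image p).sort (· ≤ ·)).getD (i - 1) 0
  else 0

/-- A semistandard `T` is a key if the values of each column contain the
values of every column to its east. -/
def colSet (lam : NPartition n) (T : ℕ → ℕ → ℕ) (j : ℕ) : Finset ℕ :=
  (Finset.Icc 1 (zeta lam j)).image (T j)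

def IsKey (lam : NPartition n) (T : ℕ → ℕ → ℕ) : Prop :=
  ∀ j j' : ℕ, 1 ≤ j → j ≤ j' → j' ≤ lam.part 1 → colSet lam T j' ⊆ colSet lam T j

/-! ### The (right) scanning method -/

/-- The next column of the scanning path: the earliest column `h' > h`
(up to `maxCol`) whose column bottom in the remnant `c` is nonempty and has
value weakly larger than the bottom value of column `h`. -/
def nextCol (T : ℕ → ℕ → ℕ) (c : ℕ → ℕ) (maxCol h : ℕ) : Option ℕ :=
  (List.range' (h + 1) (maxCol - h)).find?
    (fun h' => decide (0 < c h' ∧ T h (c h) ≤ T h' (c h')))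

/-- Columns of the scanning path (EWIS of column bottoms) starting at column `h`,
with explicit fuel. -/
def pathColsAux (T : ℕ → ℕ → ℕ) (c : ℕ → ℕ) (maxCol : ℕ) : ℕ → ℕ → List ℕ
  | 0, h => [h]
  | fuel + 1, h =>
    match nextCol T c maxCol h with
    | none => [h]
    | some h' => h :: pathColsAux T c maxCol fuel h'

/-- Columns of the scanning path starting at the bottom of column `j` of the
remnant with column lengths `c`. -/
def pathCols (T : ℕ → ℕ → ℕ) (c : ℕ → ℕ) (maxCol j : ℕ) : List ℕ :=
  pathColsAux T c maxCol maxCol j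

/-- Remove the scanning path starting in column `j` from the remnant `c`. -/
def removePath (T : ℕ → ℕ → ℕ) (c : ℕ → ℕ) (maxCol j : ℕ) : ℕ → ℕ :=
  fun h => if h ∈ pathCols T c maxCol j then c h - 1 else c h

/-- Iterate path removal `r` times, always starting from column `j`. -/
def remnantIter (T : ℕ → ℕ → ℕ) (c0 : ℕ → ℕ) (maxCol j : ℕ) : ℕ → ℕ → ℕ
  | 0 => c0
  | r + 1 => removePath T (remnantIter T c0 maxCol j r) maxCol j

/-- Column lengths of the remnant tableau `T^{(j;i)}`. -/
def remnant (lam : NPartition n) (T : ℕ → ℕ → ℕ) (j i : ℕ) : ℕ → ℕ :=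
  remnantIter T (zeta lam) (lam.part 1) j (zeta lam j - i)

/-- The scanning path `P(T; j, i)`, recorded by its list of columns. -/
def scanPath (lam : NPartition n) (T : ℕ → ℕ → ℕ) (j i : ℕ) : List ℕ :=
  pathCols T (remnant lam T j i) (lam.part 1) j

/-- The scanning value `S(T; j, i)`: the last value of the EWIS from `(j,i)`. -/
def scanValue (lam : NPartition n) (T : ℕ → ℕ → ℕ) (j i : ℕ) : ℕ :=
  T ((scanPath lam T j i).getLastD j)
    (remnant lam T j i ((scanPath lam T j i).getLastD j))

/-- The box `(l,k)` lies on the scanning path `P(T; j, i)`. -/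
def InScanPath (lam : NPartition n) (T : ℕ → ℕ → ℕ) (j i l k : ℕ) : Prop :=
  l ∈ scanPath lam T j i ∧ k = remnant lam T j i l

/-- `m(U)` where `U` is the remnant with column lengths `c` restricted to the
columns `l+1, …, maxCol`:  the maximum of the column-bottom values, with the
convention `m((())) = 1` for the empty tableau. -/
def mEast (T : ℕ → ℕ → ℕ) (c : ℕ → ℕ) (maxCol l : ℕ) : ℕ :=
  max 1 (((Finset.Icc (l + 1) maxCol).filter fun h => 0 < c h).sup fun h => T h (c h))

/-! ### The condition sets A, C, and B -/

/-- The set `A_λ(T, π; l, k)`. -/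
def Aset (lam : NPartition n) (T : ℕ → ℕ → ℕ) (p : ℕ → ℕ) (l k : ℕ) : Set ℕ :=
  if keyTab lam p l k < mEast T (remnant lam T l k) (lam.part 1) l then (∅ : Set ℕ)
  else Set.Icc k (min (keyTab lam p l k) (min (south lam T l k - 1) (east lam T l k)))

/-- The set `C_λ(T, π; l, k)`. -/
def Cset (lam : NPartition n) (T : ℕ → ℕ → ℕ) (p : ℕ → ℕ) (l k : ℕ) : Set ℕ :=
  if l = lam.part 1 then {keyTab lam p l k}
  else if keyTab lam p l k < mEast T (remnant lam T l k) (lam.part 1) l then (∅ : Set ℕ)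
  else if mEast T (remnant lam T l k) (lam.part 1) l = keyTab lam p l k then
    Set.Icc k (min (keyTab lam p l k) (min (south lam T l k - 1) (east lam T l k)))
  else {keyTab lam p l k} ∩ Set.Icc k (min (south lam T l k - 1) (east lam T l k))

/-- The row index `a(l,k;j)`:  the `i` with `(l-1,k) ∈ P(T;j,i)`
(convention `a(l,k;l) = k`). -/
def aIdx (lam : NPartition n) (T : ℕ → ℕ → ℕ) (l k j : ℕ) : ℕ :=
  if j = l then k
  else ((Finset.Icc 1 (zeta lam j)).filter fun i => InScanPath lam T j i (l - 1) k).sup id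

/-- The row index `b(l,k;j)`:  the `i` with `(l,k+1) ∈ P(T;j,i)` when `k < ζ_l`,
and `ζ_j + 1` when `k = ζ_l` (convention `b(l,k;l) = k+1`). -/
def bIdx (lam : NPartition n) (T : ℕ → ℕ → ℕ) (l k j : ℕ) : ℕ :=
  if j = l then k + 1
  else if k = zeta lam l then zeta lam j + 1
  else ((Finset.Icc 1 (zeta lam j)).filter fun i => InScanPath lam T j i l (k + 1)).sup id

/-- `E(l,k;j,i)`:  the value of `T` at the box `(h,m)` of `P(T;j,i)` with `h < l`
maximal (convention `E(l,k;l,k) = k`). -/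
def Epath (lam : NPartition n) (T : ℕ → ℕ → ℕ) (l k j i : ℕ) : ℕ :=
  if j = l then k
  else
    T (((scanPath lam T j i).filter fun h => decide (h < l)).foldr max 0)
      (remnant lam T j i (((scanPath lam T j i).filter fun h => decide (h < l)).foldr max 0))

/-- The set `B_λ(T, π; l, k) = ⋂_{j=1}^{l} ⋃_{i=a(j)}^{b(j)-1} [E(l,k;j,i), Y_λ(π)(j,i)]`. -/
def Bset (lam : NPartition n) (T : ℕ → ℕ → ℕ) (p : ℕ → ℕ) (l k : ℕ) : Set ℕ :=
  {v | ∀ j, 1 ≤ j → j ≤ l →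
    ∃ i, aIdx lam T l k j ≤ i ∧ i + 1 ≤ bIdx lam T l k j ∧
      Epath lam T l k j i ≤ v ∧ v ≤ keyTab lam p j i}

/-! ### The left scanning method -/

/-- The largest row `r ≤ c j` of column `j` whose value is at most `x`. -/
def maxRow (T : ℕ → ℕ → ℕ) (c : ℕ → ℕ) (j x : ℕ) : ℕ :=
  ((Finset.Icc 1 (c j)).filter fun r => T j r ≤ x).sup id

/-- The rows of the maximizing weakly decreasing sequence through columns
`j, j-1, …, 1` with initial bound `x`, in a remnant with column lengths `c`. -/
def leftRows (T : ℕ → ℕ → ℕ) (c : ℕ → ℕ) : ℕ → ℕ → List ℕ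
  | 0, _ => []
  | j + 1, x => maxRow T c (j + 1) x :: leftRows T c j (T (j + 1) (maxRow T c (j + 1) x))

/-- The column-1 value at the end of the left scanning path originating at `(j, r)`. -/
def leftEndVal (T : ℕ → ℕ → ℕ) (c : ℕ → ℕ) (j r : ℕ) : ℕ :=
  T 1 ((leftRows T c j (T j r)).getLastD 0)

/-- Remove the left scanning path originating at `(l, c l)`, together with
all values beneath it, from the remnant `c`. -/
def leftRemovePath (T : ℕ → ℕ → ℕ) (c : ℕ → ℕ) (l : ℕ) : ℕ → ℕ :=
  fun j =>
    if 1 ≤ j ∧ j ≤ l then (leftRows T c l (T l (c l))).getD (l - j) 0 - 1 else c j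

/-- Iterate left-path removal `r` times (always for column `l`). -/
def leftRemnantIter (T : ℕ → ℕ → ℕ) (c0 : ℕ → ℕ) (l : ℕ) : ℕ → ℕ → ℕ
  | 0 => c0
  | r + 1 => leftRemovePath T (leftRemnantIter T c0 l r) l

/-- Column lengths of the left remnant used to compute `M(T; l, i)`:
`T` restricted to its first `l` columns with the left scanning paths
originating at `(l, ζ_l), …, (l, i+1)` (and everything beneath them) removed. -/
def leftRemnant (lam : NPartition n) (T : ℕ → ℕ → ℕ) (l i : ℕ) : ℕ → ℕ :=
  leftRemnantIter T (zeta lam) l (zeta lam l - i)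

/-- The left scanning value `M(T; l, i)`. -/
def leftScanValue (lam : NPartition n) (T : ℕ → ℕ → ℕ) (l i : ℕ) : ℕ :=
  leftEndVal T (leftRemnant lam T l i) l i

/-! ### The condition sets F and G -/

/-- The set `F_λ(T, σ; l, k)`. -/
def Fset (lam : NPartition n) (T : ℕ → ℕ → ℕ) (sg : ℕ → ℕ) (l k : ℕ) : Set ℕ :=
  if l = 1 then Set.Icc (keyTab lam sg 1 k) (south lam T 1 k - 1)
  else
    let U := leftRemnant lam T l k
    let q := maxRow T U (l - 1) (south lam T l k - 1)
    let P := (Finset.Icc 1 q).filter fun h => keyTab lam sg l k ≤ leftEndVal T U (l - 1) h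
    if hP : P.Nonempty then Set.Icc (T (l - 1) (P.min' hP)) (south lam T l k - 1)
    else (∅ : Set ℕ)

/-- The set `G_λ(T, σ; l, k)`. -/
def Gset (lam : NPartition n) (T : ℕ → ℕ → ℕ) (sg : ℕ → ℕ) (l k : ℕ) : Set ℕ :=
  if l = 1 then {keyTab lam sg 1 k}
  else
    let U := leftRemnant lam T l k
    let q := maxRow T U (l - 1) (south lam T l k - 1)
    let P := (Finset.Icc 1 q).filter fun h => leftEndVal T U (l - 1) h = keyTab lam sg l k
    if hP : P.Nonempty then
      Set.Icc (T (l - 1) (P.min' hP))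
        (min ((if P.max' hP + 1 ≤ U (l - 1) then T (l - 1) (P.max' hP + 1) else n + 1) - 1)
          (south lam T l k - 1))
    else (∅ : Set ℕ)

/-! ### Polynomials, divided differences, words -/

/-- Polynomials in the variables `X 1, …, X n` (indexed by `ℕ`) over `ℚ`. -/
abbrev Poly : Type := MvPolynomial ℕ ℚ

/-- The action of `s_i` on polynomials: interchange `x_i` and `x_{i+1}`. -/
def sOp (i : ℕ) (P : Poly) : Poly := rename (Equiv.swap i (i + 1)) P

/-- The divided difference operator
`ρ_i = (x_i - x_{i+1})⁻¹ ∘ (1 - s_i) ∘ x_i`, defined as the unique polynomial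
`Q` with `(x_i - x_{i+1}) Q = x_i P - s_i (x_i P)`. -/
def rhoOp (i : ℕ) (P : Poly) : Poly :=
  if h : ∃ Q : Poly, (X i - X (i + 1)) * Q = X i * P - sOp i (X i * P) then h.choose
  else 0

/-- The operator `ρ̄_i := ρ_i - 1`. -/
def rhoBarOp (i : ℕ) (P : Poly) : Poly := rhoOp i P - P

/-- Apply operators indexed by a word `[i_t, …, i_1]`, rightmost first:
`applyOps f [i_t, …, i_1] P = f i_t (⋯ (f i_1 P))`. -/
def applyOps (f : ℕ → Poly → Poly) : List ℕ → Poly → Poly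
  | [], P => P
  | i :: w, P => f i (applyOps f w P)

/-- The monomial `x_1^{λ_1} ⋯ x_n^{λ_n}`. -/
def lamMonomial (lam : NPartition n) : Poly :=
  ∏ i ∈ Finset.Icc 1 n, X i ^ lam.part i

/-- The weight monomial `x^T = ∏ x_i^{c_i}` of the filling `T`. -/
def weight (lam : NPartition n) (T : ℕ → ℕ → ℕ) : Poly :=
  ∏ b ∈ boxes lam, X (T b.1 b.2)

/-- The simple reflection `s_i` acting by value. -/
def swapVal (i v : ℕ) : ℕ := if v = i then i + 1 else if v = i + 1 then i else v

/-- The permutation `s_{i_t} ⋯ s_{i_1}.(1, 2, …, n)` obtained by applying the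
word `w = [i_t, …, i_1]` (rightmost letter first, each acting by value) to the
identity. -/
def permOfWord (w : List ℕ) : ℕ → ℕ := w.foldr (fun i f => swapVal i ∘ f) id

/-- `w` is a word in letters `s_1, …, s_{n-1}` producing `π` from `(1, …, n)`. -/
def WordFor (n : ℕ) (w : List ℕ) (p : ℕ → ℕ) : Prop :=
  (∀ i ∈ w, 1 ≤ i ∧ i + 1 ≤ n) ∧ ∀ t, 1 ≤ t → t ≤ n → permOfWord w t = p t

/-- `w` is a reduced word for `π`: it produces `π` with minimal length. -/
def IsReducedWord (n : ℕ) (w : List ℕ) (p : ℕ → ℕ) : Prop :=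
  WordFor n w p ∧ ∀ w' : List ℕ, WordFor n w' p → w.length ≤ w'.length

/-- The atom `c_λ(π;x) = ρ̄_{i_t} ⋯ ρ̄_{i_1} . x_1^{λ_1} ⋯ x_n^{λ_n}`, computed
from a choice of reduced word for `π` (it is independent of this choice). -/
def atomPoly (lam : NPartition n) (p : ℕ → ℕ) : Poly :=
  if h : ∃ w : List ℕ, IsReducedWord n w p then
    applyOps rhoBarOp h.choose (lamMonomial lam)
  else 0

/-! ### `S_n^λ` -/

/-- The set `Q_λ` of distinct column lengths of `λ`. -/
def Qset (lam : NPartition n) : Finset ℕ := (Finset.Icc 1 (lam.part 1)).image (zeta lam)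

/-- `π ∈ S_n^λ`: an `n`-permutation increasing on each block `[q_{r-1}+1, q_r]`
cut out by the column lengths of `λ` (equivalently, `π_i < π_j` whenever
`i < j` and no element of `Q_λ` lies in `[i, j)`). -/
def InSnLam (lam : NPartition n) (p : ℕ → ℕ) : Prop :=
  IsNPerm n p ∧ ∀ i j, 1 ≤ i → i < j → j ≤ n →
    (∀ q ∈ Qset lam, q < i ∨ j ≤ q) → p i < p j

end KeyPoly

/-!
A tableau is read as its sequence of columns.  The crystal operators `f_i` split the tableaux of a
fixed shape into `i`-strings, and the weights of an `i`-string sum to `ρ_i` applied to the weight of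
its head.  Let the Demazure set `D(π)` consist of the tableaux in which, for all `l` and `v`, every
strictly decreasing sequence of letters `≥ v` in the columns `≥ l` has at most
`#{t ≤ ζ_l : π_t ≥ v}` terms.  If `s_i π` is longer than `π`, then each `i`-string meets `D(π)` in
nothing, in its head, or in everything, and is contained in `D(s_i π)` or disjoint from it according
as its head lies in `D(π)` or not.  Hence `ρ_i` maps the weight sum over `D(π)` to the one over
`D(s_i π)`, and since only the highest-weight tableau lies in `D(id)`, the Demazure polynomial of
`π` is the weight sum over `D(π)`.

The scanning paths starting in column `l` partition the columns `≥ l` into weakly increasing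
sequences, and a box removed with the `r`-th path ends a strictly decreasing sequence of length `r`.
So the longest decreasing sequences with letters `≥ v` are as long as the number of paths with a
letter `≥ v`, and the inequalities defining `D(π)` become the conditions `T(l,k) ∈ A_λ(T,π;l,k)`.
-/

namespace KeyPoly

open Finset MvPolynomial

/-! ### Decreasing sets -/

section DecreasingIn

variable {h l v w x m N : ℕ} {C C' : ℕ → Finset ℕ} {S : Finset (ℕ × ℕ)}

/-- `S` is a set of boxes, recorded as (column, letter), whose letters form a strictly decreasing
subword of the column reading word of `C` (columns from left to right, each from bottom to top),
using only columns `≥ l` and letters `≥ v`. -/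
structure DecreasingIn (C : ℕ → Finset ℕ) (l v : ℕ) (S : Finset (ℕ × ℕ)) : Prop where
  le_col : ∀ x ∈ S, l ≤ x.1
  mem : ∀ x ∈ S, x.2 ∈ C x.1
  le_letter : ∀ x ∈ S, v ≤ x.2
  lt_of_col_lt : ∀ x ∈ S, ∀ y ∈ S, x.1 < y.1 → y.2 < x.2

/-- No decreasing set in the columns `≥ l` and letters `≥ v` of `C` has more than `N` boxes. -/
def DecreasingBound (C : ℕ → Finset ℕ) (l v N : ℕ) : Prop :=
  ∀ S, DecreasingIn C l v S → #S ≤ N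

lemma DecreasingBound.mono (h : DecreasingBound C l v m) (hmN : m ≤ N) :
    DecreasingBound C l v N :=
  fun S hS => (h S hS).trans hmN

lemma DecreasingBound.of_le_letter (h : DecreasingBound C l v N) (hvw : v ≤ w) :
    DecreasingBound C l w N :=
  fun S hS => h S { hS with le_letter := fun x hx => hvw.trans (hS.le_letter x hx) }

lemma DecreasingIn.filter (hS : DecreasingIn C l v S) (w : ℕ) :
    DecreasingIn C l w {x ∈ S | w ≤ x.2} where
  le_col x hx := hS.le_col x (filter_subset _ _ hx)
  mem x hx := hS.mem x (filter_subset _ _ hx)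
  le_letter _ hx := (mem_filter.1 hx).2
  lt_of_col_lt x hx y hy := hS.lt_of_col_lt x (filter_subset _ _ hx) y (filter_subset _ _ hy)

lemma DecreasingBound.pred (h : DecreasingBound C l (v + 1) N) :
    DecreasingBound C l v (N + 1) := by
  intro S hS
  have hle := h _ (hS.filter (v + 1))
  have hone : #{x ∈ S | ¬ v + 1 ≤ x.2} ≤ 1 := by
    refine card_le_one.2 fun x hx y hy => ?_
    have hxy := hS.lt_of_col_lt x (filter_subset _ _ hx) y (filter_subset _ _ hy)
    have hyx := hS.lt_of_col_lt y (filter_subset _ _ hy) x (filter_subset _ _ hx)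
    have hvx := hS.le_letter x (filter_subset _ _ hx)
    have hvy := hS.le_letter y (filter_subset _ _ hy)
    grind
  grind [card_filter_add_card_filter_not (s := S) (v + 1 ≤ ·.2)]

lemma DecreasingIn.injOn_snd (hS : DecreasingIn C l v S) :
    Set.InjOn Prod.snd (S : Set (ℕ × ℕ)) := fun x hx y hy h =>
  Prod.ext (le_antisymm
    (not_lt.1 fun hlt => (hS.lt_of_col_lt y hy x hx hlt).ne h)
    (not_lt.1 fun hlt => (hS.lt_of_col_lt x hx y hy hlt).ne' h)) h

lemma DecreasingIn.replace (hS : DecreasingIn C l v S) {x y : ℕ × ℕ}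
    (hx : x ∈ S) (hy : y ∉ S) (hcol : l ≤ y.1) (hletter : v ≤ y.2) (hyC : y.2 ∈ C' y.1)
    (hC : ∀ z ∈ S, z ≠ x → z.2 ∈ C' z.1)
    (hlt : ∀ z ∈ S, z ≠ x → (z.1 < y.1 → y.2 < z.2) ∧ (y.1 < z.1 → z.2 < y.2)) :
    ∃ S', DecreasingIn C' l v S' ∧ #S' = #S := by
  obtain ⟨hScol, -, hSletter, hSlt⟩ := hS
  have hpos := card_pos.2 ⟨x, hx⟩
  exact ⟨insert y (S.erase x), ⟨by grind, by grind, by grind, by grind⟩, by grind⟩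

lemma DecreasingIn.insert (hS : DecreasingIn C l v S) (hlh : l ≤ h) (hx : x ∈ C h)
    (hxv : x < v) (hcol : ∀ b ∈ S, b.1 ≤ h) :
    DecreasingIn C l x (insert (h, x) S) where
  le_col := forall_mem_insert _ _ _ |>.2 ⟨hlh, hS.le_col⟩
  mem := forall_mem_insert _ _ _ |>.2 ⟨hx, hS.mem⟩
  le_letter := forall_mem_insert _ _ _ |>.2 ⟨le_rfl, fun b hb => hxv.le.trans (hS.le_letter b hb)⟩
  lt_of_col_lt := by
    intro b hb b' hb' hlt
    obtain rfl | hb := mem_insert.1 hb <;> obtain rfl | hb' := mem_insert.1 hb'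
    · exact absurd hlt (lt_irrefl _)
    · exact absurd hlt (hcol b' hb').not_gt
    · exact hxv.trans_le (hS.le_letter b hb)
    · exact hS.lt_of_col_lt b hb b' hb' hlt

end DecreasingIn

/-! ### Crystal steps -/

section CrystalStep

variable {i j l v N a b : ℕ} {C C' : ℕ → Finset ℕ}

/-- The contribution of column `h` to the `i`-signature of a sequence `C` of columns: a letter `i`
counts `+1` and a letter `i + 1` counts `-1`. -/
def signature (C : ℕ → Finset ℕ) (i h : ℕ) : ℤ :=
  (if i ∈ C h then 1 else 0) - (if i + 1 ∈ C h then 1 else 0)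

/-- The height, before column `b`, of the lattice path whose steps are the `i`-signature of `C`. -/
def height (C : ℕ → Finset ℕ) (i b : ℕ) : ℤ := ∑ h ∈ range b, signature C i h

/-- The crystal operator `f_i` turns `C` into `C'` by changing the letter `i` of column `j` into
`i + 1`.  In the signature rule, `j` is the column where the height reaches its maximum for the
first time. -/
structure CrystalStep (i : ℕ) (C : ℕ → Finset ℕ) (j : ℕ) (C' : ℕ → Finset ℕ) : Prop where
  mem : i ∈ C j
  succ_notMem : i + 1 ∉ C j
  height_le_of_le : ∀ b ≤ j, height C i b ≤ height C i j
  height_le_of_lt : ∀ b, j < b → height C i b ≤ height C i (j + 1)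
  eq_update : C' = Function.update C j (insert (i + 1) ((C j).erase i))

@[simp]
lemma height_zero (C : ℕ → Finset ℕ) (i : ℕ) : height C i 0 = 0 := sum_range_zero _

lemma height_succ (C : ℕ → Finset ℕ) (i b : ℕ) :
    height C i (b + 1) = height C i b + signature C i b :=
  sum_range_succ _ _

lemma height_sub_height (C : ℕ → Finset ℕ) (i : ℕ) (hab : a ≤ b) :
    height C i b - height C i a = ∑ h ∈ Ico a b, signature C i h :=
  (sum_Ico_eq_sub _ hab).symm

lemma signature_le_one (C : ℕ → Finset ℕ) (i h : ℕ) : signature C i h ≤ 1 := by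
  grind [signature]

lemma height_le_of_forall_notMem (hab : a ≤ b) (h : ∀ c ∈ Ico a b, i ∉ C c) :
    height C i b ≤ height C i a := by
  rw [← sub_nonpos, height_sub_height C i hab]
  exact sum_nonpos fun c hc => by grind [signature]

lemma height_le_of_forall_succ_notMem (hab : a ≤ b) (h : ∀ c ∈ Ico a b, i + 1 ∉ C c) :
    height C i a ≤ height C i b := by
  rw [← sub_nonneg, height_sub_height C i hab]
  exact sum_nonneg fun c hc => by grind [signature]

lemma exists_mem_right_of_height_le (haj : a < j) (ha : i + 1 ∈ C a)
    (hle : height C i a ≤ height C i j) : ∃ b, a ≤ b ∧ b < j ∧ i ∈ C b := by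
  by_contra! hno
  have htail := height_le_of_forall_notMem (C := C) (i := i) (Nat.succ_le_of_lt haj)
    (by grind)
  grind [height_succ, signature]

lemma exists_succ_mem_left_of_height_le (hjb : j < b) (hb : i ∈ C b)
    (hle : height C i (b + 1) ≤ height C i (j + 1)) : ∃ a, j < a ∧ a ≤ b ∧ i + 1 ∈ C a := by
  by_contra! hno
  have htail := height_le_of_forall_succ_notMem (C := C) (i := i) (Nat.succ_le_of_lt hjb)
    (by grind)
  grind [height_succ, signature]

lemma CrystalStep.mem_iff (h : CrystalStep i C j C') (g x : ℕ) :
    x ∈ C' g ↔ (g ≠ j ∧ x ∈ C g) ∨ (g = j ∧ (x = i + 1 ∨ (x ≠ i ∧ x ∈ C g))) := by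
  rw [h.eq_update, Function.update_apply]
  grind

lemma CrystalStep.mem_of_ne (h : CrystalStep i C j C') {x : ℕ × ℕ} (hx : x.2 ∈ C x.1)
    (hne : x ≠ (j, i)) : x.2 ∈ C' x.1 := by
  grind [h.mem_iff]

lemma CrystalStep.mem_source_of_ne (h : CrystalStep i C j C') {x : ℕ × ℕ} (hx : x.2 ∈ C' x.1)
    (hne : x ≠ (j, i + 1)) : x.2 ∈ C x.1 := by
  grind [h.mem_iff]

/-- If the box `(j, i)` of `S` disappears and some `(a, i + 1) ∈ S` blocks its replacement by
`(j, i + 1)`, then the signature rule provides a letter `i` between the columns `a` and `j`. -/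
lemma CrystalStep.exists_decreasingIn_target (h : CrystalStep i C j C') {S : Finset (ℕ × ℕ)}
    (hS : DecreasingIn C l v S) : ∃ S', DecreasingIn C' l v S' ∧ #S' = #S := by
  have hlt := hS.lt_of_col_lt
  by_cases hj : (j, i) ∈ S
  · have hC : ∀ z ∈ S, z ≠ (j, i) → z.2 ∈ C' z.1 := fun z hz => h.mem_of_ne (hS.mem z hz)
    have hcol := hS.le_col _ hj
    have hletter := hS.le_letter _ hj
    by_cases ha : ∃ a, (a, i + 1) ∈ S
    · obtain ⟨a, ha⟩ := ha
      have haj : a < j := by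
        have := h.succ_notMem
        grind [hS.mem _ ha]
      obtain ⟨b, hab, hbj, hb⟩ :=
        exists_mem_right_of_height_le haj (hS.mem _ ha) (h.height_le_of_le a haj.le)
      have hla := hS.le_col _ ha
      refine hS.replace (y := (b, i)) hj (by grind) (by grind) hletter ?_ hC (by grind)
      exact h.mem_of_ne hb (by grind)
    · push Not at ha
      exact hS.replace (y := (j, i + 1)) hj (ha j) hcol (by grind)
        ((h.mem_iff _ _).2 (by simp)) hC (by grind)
  · exact ⟨S, { hS with mem := fun z hz => h.mem_of_ne (hS.mem z hz) (by grind) }, rfl⟩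

lemma CrystalStep.exists_decreasingIn_source (h : CrystalStep i C j C') (hv : v ≠ i + 1)
    {S : Finset (ℕ × ℕ)} (hS : DecreasingIn C' l v S) :
    ∃ S', DecreasingIn C l v S' ∧ #S' = #S := by
  have hlt := hS.lt_of_col_lt
  by_cases hj : (j, i + 1) ∈ S
  · have hC : ∀ z ∈ S, z ≠ (j, i + 1) → z.2 ∈ C z.1 :=
      fun z hz => h.mem_source_of_ne (hS.mem z hz)
    have hcol := hS.le_col _ hj
    have hletter := hS.le_letter _ hj
    by_cases hb : ∃ b, j < b ∧ (b, i) ∈ S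
    · obtain ⟨b, hjb, hb⟩ := hb
      obtain ⟨a, hja, hab, ha⟩ := exists_succ_mem_left_of_height_le hjb
        (hC _ hb (by simp)) (h.height_le_of_lt (b + 1) (by grind))
      exact hS.replace (y := (a, i + 1)) hj (by grind) (by grind) hletter ha hC (by grind)
    · push Not at hb
      have hjS : (j, i) ∉ S := fun hjS => by grind [h.mem_iff, hS.mem _ hjS]
      exact hS.replace (y := (j, i)) hj hjS hcol (by grind) h.mem hC (by grind)
  · exact ⟨S, { hS with mem := fun z hz => h.mem_source_of_ne (hS.mem z hz) (by grind) }, rfl⟩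

lemma CrystalStep.decreasingBound_source (h : CrystalStep i C j C')
    (hN : DecreasingBound C' l v N) : DecreasingBound C l v N := by
  intro S hS
  obtain ⟨S', hS', hcard⟩ := h.exists_decreasingIn_target hS
  exact hcard ▸ hN S' hS'

lemma CrystalStep.decreasingBound_iff (h : CrystalStep i C j C') (hv : v ≠ i + 1) :
    DecreasingBound C l v N ↔ DecreasingBound C' l v N := by
  refine ⟨fun hN S hS => ?_, h.decreasingBound_source⟩
  obtain ⟨S', hS', hcard⟩ := h.exists_decreasingIn_source hv hS
  exact hcard ▸ hN S' hS'

lemma CrystalStep.exists_decreasingIn_succ_source {j' : ℕ} (h : CrystalStep i C j C')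
    (hjj' : j < j') (hj' : i + 1 ∈ C j') {S : Finset (ℕ × ℕ)}
    (hS : DecreasingIn C' l (i + 1) S) : ∃ S', DecreasingIn C l (i + 1) S' ∧ #S' = #S := by
  have hlt := hS.lt_of_col_lt
  have hletter := hS.le_letter
  by_cases hj : (j, i + 1) ∈ S
  · have hcol := hS.le_col _ hj
    exact hS.replace (y := (j', i + 1)) hj (by grind) (by grind) le_rfl hj'
      (fun z hz => h.mem_source_of_ne (hS.mem z hz)) (by grind)
  · exact ⟨S, { hS with mem := fun z hz => h.mem_source_of_ne (hS.mem z hz) (by grind) }, rfl⟩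

lemma CrystalStep.decreasingBound_succ_iff {j' : ℕ} (h : CrystalStep i C j C') (hjj' : j < j')
    (hj' : i + 1 ∈ C j') : DecreasingBound C l (i + 1) N ↔ DecreasingBound C' l (i + 1) N := by
  refine ⟨fun hN S hS => ?_, h.decreasingBound_source⟩
  obtain ⟨S', hS', hcard⟩ := h.exists_decreasingIn_succ_source hjj' hj' hS
  exact hcard ▸ hN S' hS'

end CrystalStep

/-! ### Strings -/

section CrystalString

variable {i j j' b M r : ℕ} {C C' C'' C₁ : ℕ → Finset ℕ}

lemma isGreatest_height {a : ℕ} (ha : ∀ b, height C i b ≤ height C i a) :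
    IsGreatest (Set.range (height C i)) (height C i a) :=
  ⟨⟨a, rfl⟩, by rintro _ ⟨b, rfl⟩; exact ha b⟩

lemma height_eq_of_eq_off (hoff : ∀ h ≠ j, C' h = C h) (i b : ℕ) :
    height C' i b =
      height C i b + if j < b then signature C' i j - signature C i j else 0 := by
  have hsig : ∀ h, signature C' i h =
      signature C i h + if j = h then signature C' i j - signature C i j else 0 := by
    intro h
    by_cases hj : j = h
    · simp [hj]
    · simp [hj, signature, hoff h (Ne.symm hj)]
  simp only [height]
  rw [sum_congr rfl fun h _ => hsig h, sum_add_distrib, sum_ite_eq]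
  simp only [mem_range]

lemma CrystalStep.eq_off (h : CrystalStep i C j C') {g : ℕ} (hg : g ≠ j) : C' g = C g := by
  rw [h.eq_update, Function.update_of_ne hg]

lemma CrystalStep.signature_source (h : CrystalStep i C j C') : signature C i j = 1 := by
  simp [signature, h.mem, h.succ_notMem]

lemma CrystalStep.signature_target (h : CrystalStep i C j C') : signature C' i j = -1 := by
  simp [signature, h.mem_iff]

lemma CrystalStep.height_target (h : CrystalStep i C j C') (b : ℕ) :
    height C' i b = height C i b - if j < b then 2 else 0 := by
  rw [height_eq_of_eq_off (fun g hg => h.eq_off hg), h.signature_source, h.signature_target]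
  split_ifs <;> ring

lemma CrystalStep.height_column_succ (h : CrystalStep i C j C') :
    height C i (j + 1) = height C i j + 1 := by
  rw [height_succ, h.signature_source]

lemma CrystalStep.height_lt_of_le (h : CrystalStep i C j C') (hb : b ≤ j) :
    height C i b < height C i (j + 1) := by
  grind [h.height_le_of_le b hb, h.height_column_succ]

lemma CrystalStep.height_le (h : CrystalStep i C j C') (b : ℕ) :
    height C i b ≤ height C i (j + 1) := by
  rcases le_or_gt b j with hb | hb
  · exact (h.height_lt_of_le hb).le
  · exact h.height_le_of_lt b hb

lemma CrystalStep.target_height_le (h : CrystalStep i C j C') (b : ℕ) :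
    height C' i b ≤ height C' i j := by
  rw [h.height_target, h.height_target, if_neg (lt_irrefl j)]
  rcases le_or_gt b j with hb | hb
  · simpa [hb.not_gt] using h.height_le_of_le b hb
  · grind [h.height_le b, h.height_column_succ]

lemma CrystalStep.target_height_lt (h : CrystalStep i C j C') (hb : j < b) :
    height C' i b < height C' i j := by
  rw [h.height_target, h.height_target]
  grind [h.height_le b, h.height_column_succ]

lemma crystalStep_of_first_max (hlt : ∀ b ≤ j, height C i b < height C i (j + 1))
    (hle : ∀ b, j < b → height C i b ≤ height C i (j + 1)) :
    CrystalStep i C j (Function.update C j (insert (i + 1) ((C j).erase i))) := by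
  have hrise := hlt j le_rfl
  rw [height_succ] at hrise
  refine ⟨by grind [signature], by grind [signature], fun b hb => ?_, hle, rfl⟩
  grind [hlt b hb, height_succ C i j, signature_le_one C i j]

lemma crystalStep_of_last_max (hle : ∀ b ≤ j, height C i b ≤ height C i j)
    (hlt : ∀ b, j < b → height C i b < height C i j) :
    CrystalStep i (Function.update C j (insert i ((C j).erase (i + 1)))) j C := by
  have hfall := hlt (j + 1) (Nat.lt_succ_self j)
  rw [height_succ] at hfall
  have hsucc : i + 1 ∈ C j := by grind [signature]
  have hi : i ∉ C j := by grind [signature]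
  have hsig : signature C i j = -1 := by simp [signature, hsucc, hi]
  set C₁ := Function.update C j (insert i ((C j).erase (i + 1)))
  have hC₁ : C₁ j = insert i ((C j).erase (i + 1)) := Function.update_self ..
  have hsig₁ : signature C₁ i j = 1 := by simp [signature, hC₁]
  have hheight := height_eq_of_eq_off (C := C) (C' := C₁) (j := j)
    (fun h hh => Function.update_of_ne hh ..) i
  rw [hsig, hsig₁] at hheight
  refine ⟨by simp [hC₁], by simp [hC₁], by grind, fun b hb => ?_, ?_⟩
  · grind [height_succ C i j, hlt b hb]
  · rw [hC₁, Function.update_idem, eq_comm, Function.update_eq_self_iff]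
    grind

lemma CrystalStep.column_lt (h : CrystalStep i C j C') (h' : CrystalStep i C' j' C'') :
    j' < j := by
  by_contra! hj
  exact (h'.height_le j).not_gt (h.target_height_lt (by grind))

lemma CrystalStep.target_unique (h : CrystalStep i C j C') (h' : CrystalStep i C j' C'') :
    C' = C'' := by
  obtain rfl : j = j' := by
    rcases lt_trichotomy j j' with hj | hj | hj
    · exact absurd (h.height_le (j' + 1)) (h'.height_lt_of_le hj).not_ge
    · exact hj
    · exact absurd (h'.height_le (j + 1)) (h.height_lt_of_le hj).not_ge
  rw [h.eq_update, h'.eq_update]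

lemma CrystalStep.source_eq (h : CrystalStep i C j C') :
    C = Function.update C' j (insert i ((C' j).erase (i + 1))) := by
  have hi := h.mem
  have hi' := h.succ_notMem
  rw [h.eq_update, Function.update_self, Function.update_idem, eq_comm,
    Function.update_eq_self_iff]
  grind

lemma CrystalStep.source_unique (h : CrystalStep i C j C') (h' : CrystalStep i C₁ j' C') :
    C = C₁ := by
  obtain rfl : j = j' := by
    rcases lt_trichotomy j j' with hj | hj | hj
    · exact absurd (h'.target_height_le j) (h.target_height_lt hj).not_ge
    · exact hj
    · exact absurd (h.target_height_le j') (h'.target_height_lt hj).not_ge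
  rw [h.source_eq, h'.source_eq]

/-- All columns of `C` beyond column `M` are empty. -/
def EmptyBeyond (M : ℕ) (C : ℕ → Finset ℕ) : Prop := ∀ h, M < h → C h = ∅

/-- The operator `f_i` can be applied to `C` exactly `r` times (`φ_i(C) = r`); by the signature
rule this is the maximum of the height. -/
def HasStringLength (C : ℕ → Finset ℕ) (i r : ℕ) : Prop :=
  IsGreatest (Set.range (height C i)) r

/-- `C` is the first element of its `i`-string. -/
def IsStringHead (i : ℕ) (C : ℕ → Finset ℕ) : Prop := ∀ j C₁, ¬ CrystalStep i C₁ j C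

lemma EmptyBeyond.height_eq (hC : EmptyBeyond M C) (i : ℕ) (hb : M < b) :
    height C i b = height C i (M + 1) := by
  rw [← sub_eq_zero, height_sub_height C i hb]
  refine sum_eq_zero fun h hh => ?_
  simp [signature, hC h (by grind)]

lemma EmptyBeyond.exists_max (hC : EmptyBeyond M C) (i : ℕ) :
    ∃ a ≤ M + 1, ∀ b, height C i b ≤ height C i a := by
  obtain ⟨a, ha, hmax⟩ := exists_max_image (range (M + 2)) (height C i) ⟨0, by simp⟩
  refine ⟨a, by grind, fun b => ?_⟩
  by_cases hb : b < M + 2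
  · exact hmax b (mem_range.2 hb)
  · rw [hC.height_eq i (by grind)]
    exact hmax _ (by simp)

lemma EmptyBeyond.exists_last_max (hC : EmptyBeyond M C) {i : ℕ}
    (hb : height C i (M + 1) < height C i b) :
    ∃ j, (∀ a, height C i a ≤ height C i j) ∧ ∀ a, j < a → height C i a < height C i j := by
  obtain ⟨m, -, hmax⟩ := hC.exists_max i
  have hbelow : ∃ k, ∀ a, k ≤ a → height C i a < height C i m :=
    ⟨M + 1, fun a ha => by grind [hC.height_eq i (b := a), hmax b]⟩
  have hk := Nat.find_spec hbelow
  have hmin : ¬ ∀ a, Nat.find hbelow - 1 ≤ a → height C i a < height C i m :=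
    Nat.find_min hbelow (by grind [hk m])
  push Not at hmin
  obtain ⟨j, hj, hmj⟩ := hmin
  have hjm : height C i j = height C i m := (hmax j).antisymm hmj
  refine ⟨j, fun a => hjm ▸ hmax a, fun a ha => hjm ▸ hk a ?_⟩
  grind

lemma EmptyBeyond.exists_hasStringLength (hC : EmptyBeyond M C) (i : ℕ) :
    ∃ r, HasStringLength C i r := by
  obtain ⟨a, -, ha⟩ := hC.exists_max i
  have hmax := isGreatest_height ha
  lift height C i a to ℕ using (height_zero C i ▸ ha 0) with r
  exact ⟨r, hmax⟩

lemma HasStringLength.unique {r' : ℕ} (h : HasStringLength C i r)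
    (h' : HasStringLength C i r') : r = r' := by
  exact_mod_cast IsGreatest.unique h h'

lemma HasStringLength.exists_crystalStep (h : HasStringLength C i (r + 1)) :
    ∃ j C', CrystalStep i C j C' := by
  obtain ⟨hex, hmax⟩ := h
  have hle : ∀ b, height C i b ≤ (r + 1 : ℕ) := fun b => hmax ⟨b, rfl⟩
  have hfind := Nat.find_spec hex
  have hmin := fun b => Nat.find_min hex (m := b)
  generalize Nat.find hex = a at hfind hmin
  obtain _ | j := a
  · grind [height_zero]
  · exact ⟨j, _, crystalStep_of_first_max (by grind) (by grind)⟩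

lemma CrystalStep.hasStringLength_source (h : CrystalStep i C j C')
    (hr : HasStringLength C' i r) : HasStringLength C i (r + 1) := by
  have hrj : height C' i j = r :=
    (isGreatest_height h.target_height_le).unique hr
  have hcast : height C i (j + 1) = (r + 1 : ℕ) := by
    grind [h.height_target j, h.height_column_succ]
  rw [HasStringLength, ← hcast]
  exact isGreatest_height h.height_le

lemma CrystalStep.exists_hasStringLength_target (h : CrystalStep i C j C')
    (hr : HasStringLength C i r) : ∃ r', r = r' + 1 ∧ HasStringLength C' i r' := by
  have hrj : height C i (j + 1) = r :=
    (isGreatest_height h.height_le).unique hr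
  have hpos := h.height_lt_of_le (Nat.zero_le j)
  rw [height_zero] at hpos
  have hcast : height C' i j = (r - 1 : ℕ) := by
    grind [h.height_target j, h.height_column_succ]
  refine ⟨r - 1, by grind, ?_⟩
  rw [HasStringLength, ← hcast]
  exact isGreatest_height h.target_height_le

lemma IsStringHead.height_le (hhead : IsStringHead i C) (hC : EmptyBeyond M C) (b : ℕ) :
    height C i b ≤ height C i (M + 1) := by
  by_contra! hb
  obtain ⟨j, hmax, hlt⟩ := hC.exists_last_max hb
  exact hhead _ _ (crystalStep_of_last_max (fun a _ => hmax a) hlt)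

lemma IsStringHead.hasStringLength_iff (hhead : IsStringHead i C) (hC : EmptyBeyond M C) :
    HasStringLength C i r ↔ height C i (M + 1) = r := by
  have hmax := isGreatest_height (hhead.height_le hC)
  exact ⟨hmax.unique, fun h => by rwa [h] at hmax⟩

end CrystalString

/-! ### Tableaux as sequences of columns -/

section ColumnTableau

variable {n M i j v : ℕ} {z : ℕ → ℕ} {s : Finset ℕ} {C C' : ℕ → Finset ℕ}

/-- The number of elements of `s` smaller than `v`. -/
def countLT (s : Finset ℕ) (v : ℕ) : ℕ := #{x ∈ s | x < v}

/-- `C` is the sequence of columns of a semistandard tableau with letters in `[1, n]` whose column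
`j` has length `z j` and whose columns beyond `M` are empty.  Weak increase along rows is expressed
by counting letters.  The columns of a tableau are indexed from `1`; column `0` plays no role. -/
structure IsColumnTableau (n M : ℕ) (z : ℕ → ℕ) (C : ℕ → Finset ℕ) : Prop where
  subset : ∀ j, C j ⊆ Icc 1 n
  card_eq : ∀ j, #(C j) = z j
  countLT_le : ∀ j, 1 ≤ j → ∀ v, countLT (C (j + 1)) v ≤ countLT (C j) v
  emptyBeyond : EmptyBeyond M C

lemma countLT_succ (s : Finset ℕ) (v : ℕ) :
    countLT s (v + 1) = countLT s v + if v ∈ s then 1 else 0 := by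
  simp only [countLT, Nat.lt_succ_iff_lt_or_eq, filter_or]
  rw [card_union_of_disjoint (disjoint_filter.2 fun x _ h => h.ne), filter_eq']
  split_ifs <;> simp

lemma countLT_insert_erase (hi : i ∈ s) (hi' : i + 1 ∉ s) (v : ℕ) :
    countLT (insert (i + 1) (s.erase i)) v + (if v = i + 1 then 1 else 0) = countLT s v := by
  simp only [countLT, filter_insert, filter_erase]
  rcases lt_trichotomy v (i + 1) with hv | rfl | hv
  · rw [if_neg (by grind), if_neg (by grind), erase_eq_of_notMem (by grind), add_zero]
  · rw [if_neg (by grind), if_pos rfl, card_erase_add_one (by grind)]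
  · rw [if_pos hv, if_neg (by grind), card_insert_of_notMem (by grind),
      card_erase_add_one (by grind)]

lemma CrystalStep.countLT_target (h : CrystalStep i C j C') (v : ℕ) :
    countLT (C' j) v + (if v = i + 1 then 1 else 0) = countLT (C j) v := by
  rw [h.eq_update, Function.update_self, countLT_insert_erase h.mem h.succ_notMem]

lemma CrystalStep.countLT_column_succ_le (h : CrystalStep i C j C')
    (hrow : ∀ v, countLT (C (j + 1)) v ≤ countLT (C j) v) (v : ℕ) :
    countLT (C (j + 1)) v ≤ countLT (C' j) v := by
  have htarget := h.countLT_target v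
  by_cases hv : v = i + 1
  · subst hv
    have hsucc : i ∈ C (j + 1) → i + 1 ∈ C (j + 1) := fun hmem => by
      obtain ⟨a, hja, haj, ha⟩ := exists_succ_mem_left_of_height_le (Nat.lt_succ_self j) hmem
        (h.height_le_of_lt _ (by grind))
      grind
    grind [countLT_succ, h.mem, h.succ_notMem, hrow i, hrow (i + 2)]
  · grind [hrow v]

lemma CrystalStep.countLT_le_column_pred {g : ℕ} (h : CrystalStep i C (g + 1) C')
    (hrow : ∀ v, countLT (C' (g + 1)) v ≤ countLT (C g) v) (v : ℕ) :
    countLT (C (g + 1)) v ≤ countLT (C g) v := by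
  have htarget := h.countLT_target v
  by_cases hv : v = i + 1
  · subst hv
    have hpred : i + 1 ∈ C g → i ∈ C g := fun hmem => by
      obtain ⟨b, hgb, hbg, hb⟩ := exists_mem_right_of_height_le (Nat.lt_succ_self g) hmem
        (h.height_le_of_le _ (by grind))
      grind
    have hi : i ∉ C' (g + 1) := by simp [h.mem_iff]
    have hi' : i + 1 ∈ C' (g + 1) := by simp [h.mem_iff]
    grind [countLT_succ, hrow i, hrow (i + 2)]
  · grind [hrow v]

lemma CrystalStep.card_eq (h : CrystalStep i C j C') (g : ℕ) : #(C' g) = #(C g) := by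
  by_cases hg : g = j
  · subst hg
    have hpos := card_pos.2 ⟨i, h.mem⟩
    rw [h.eq_update, Function.update_self, card_insert_of_notMem (by simp [h.succ_notMem]),
      card_erase_of_mem h.mem, Nat.sub_add_cancel hpos]
  · rw [h.eq_off hg]

lemma CrystalStep.emptyBeyond_iff (h : CrystalStep i C j C') :
    EmptyBeyond M C ↔ EmptyBeyond M C' := by
  simp only [EmptyBeyond, ← card_eq_zero, h.card_eq]

lemma CrystalStep.isColumnTableau_target (h : CrystalStep i C j C') (hin : i + 1 ≤ n)
    (hC : IsColumnTableau n M z C) : IsColumnTableau n M z C' where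
  subset g x hx := by
    rcases (h.mem_iff g x).1 hx with ⟨-, hx⟩ | ⟨-, rfl | ⟨-, hx⟩⟩
    · exact hC.subset g hx
    · grind
    · exact hC.subset g hx
  card_eq g := by rw [h.card_eq, hC.card_eq]
  countLT_le g hg v := by
    have hrow := hC.countLT_le g hg
    by_cases hgj : g = j
    · subst hgj
      rw [h.eq_off (Nat.succ_ne_self g)]
      exact h.countLT_column_succ_le hrow v
    · rw [h.eq_off hgj]
      by_cases hgj' : g + 1 = j
      · grind [h.countLT_target v, hrow v]
      · exact h.eq_off hgj' ▸ hrow v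
  emptyBeyond := h.emptyBeyond_iff.1 hC.emptyBeyond

lemma CrystalStep.isColumnTableau_source (h : CrystalStep i C j C') (hi : 1 ≤ i)
    (hC : IsColumnTableau n M z C') : IsColumnTableau n M z C where
  subset g x hx := by
    by_cases hxi : (g, x) = (j, i)
    · have hsucc := hC.subset j ((h.mem_iff j (i + 1)).2 (by simp))
      grind
    · exact hC.subset g (h.mem_of_ne (x := (g, x)) hx hxi)
  card_eq g := by rw [← h.card_eq, hC.card_eq]
  countLT_le g hg v := by
    have hrow := hC.countLT_le g hg
    by_cases hgj : g + 1 = j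
    · subst hgj
      rw [h.eq_off (Nat.succ_ne_self g).symm] at hrow
      exact h.countLT_le_column_pred hrow v
    · rw [h.eq_off hgj] at hrow
      by_cases hgj' : g = j
      · grind [h.countLT_target v, hrow v]
      · exact h.eq_off hgj' ▸ hrow v
  emptyBeyond := h.emptyBeyond_iff.2 hC.emptyBeyond

end ColumnTableau

/-! ### The Demazure condition along strings -/

section Demazure

variable {i j j' k l m M N r v w : ℕ} {z p : ℕ → ℕ} {C C' C'' : ℕ → Finset ℕ}

/-- The crystal operator `f_i` as a function, extended by the identity. -/
def crystalOp (i : ℕ) (C : ℕ → Finset ℕ) : ℕ → Finset ℕ :=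
  if h : ∃ C' j, CrystalStep i C j C' then h.choose else C

lemma CrystalStep.crystalOp_eq (h : CrystalStep i C j C') : crystalOp i C = C' := by
  have hex : ∃ C' j, CrystalStep i C j C' := ⟨C', j, h⟩
  rw [crystalOp, dif_pos hex]
  obtain ⟨j', hj'⟩ := hex.choose_spec
  exact hj'.target_unique h

lemma HasStringLength.crystalStep_crystalOp (h : HasStringLength C i (r + 1)) :
    ∃ j, CrystalStep i C j (crystalOp i C) := by
  obtain ⟨j, C', hstep⟩ := h.exists_crystalStep
  exact ⟨j, hstep.crystalOp_eq ▸ hstep⟩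

lemma HasStringLength.iterate (h : HasStringLength C i r) (hk : k ≤ r) :
    HasStringLength ((crystalOp i)^[k] C) i (r - k) := by
  induction k with
  | zero => exact h
  | succ k ih =>
    have hlength := ih (by grind)
    rw [show r - k = r - (k + 1) + 1 by grind] at hlength
    obtain ⟨j, hj⟩ := hlength.crystalStep_crystalOp
    obtain ⟨r', hr', htarget⟩ := hj.exists_hasStringLength_target hlength
    rw [Function.iterate_succ_apply']
    rwa [Nat.succ.inj hr']

lemma HasStringLength.crystalStep_iterate (h : HasStringLength C i r) (hk : k < r) :
    ∃ j, CrystalStep i ((crystalOp i)^[k] C) j ((crystalOp i)^[k + 1] C) := by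
  have hlength := h.iterate hk.le
  rw [show r - k = r - (k + 1) + 1 by grind] at hlength
  rw [Function.iterate_succ_apply']
  exact hlength.crystalStep_crystalOp

/-- The number of `t ∈ [1, m]` with `v ≤ p t`. -/
def countGE (p : ℕ → ℕ) (m v : ℕ) : ℕ := #{t ∈ Icc 1 m | v ≤ p t}

/-- The condition cutting out the Demazure set of `p` among the tableaux with column lengths `z`:
for all `l ≥ 1` and `v`, a decreasing set of letters `≥ v` in the columns `≥ l` has at most as many
boxes as there are letters `≥ v` in the `l`-th column `p 1, …, p (z l)` of the key of `p`. -/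
def InDemazure (z : ℕ → ℕ) (C : ℕ → Finset ℕ) (p : ℕ → ℕ) : Prop :=
  ∀ l, 1 ≤ l → ∀ v, DecreasingBound C l v (countGE p (z l) v)

lemma CrystalStep.inDemazure_source (h : CrystalStep i C j C') (hD : InDemazure z C' p) :
    InDemazure z C p :=
  fun l hl v => h.decreasingBound_source (hD l hl v)

lemma CrystalStep.inDemazure_iff (h : CrystalStep i C j C') (h' : CrystalStep i C' j' C'') :
    InDemazure z C' p ↔ InDemazure z C'' p := by
  refine forall_congr' fun l => imp_congr_right fun _ => forall_congr' fun v => ?_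
  by_cases hv : v = i + 1
  · subst hv
    exact h'.decreasingBound_succ_iff (h.column_lt h') ((h.mem_iff _ _).2 (by simp))
  · exact h'.decreasingBound_iff hv

lemma HasStringLength.inDemazure_iterate_succ_iff (h : HasStringLength C i r) (hk : k < r) :
    InDemazure z ((crystalOp i)^[k + 1] C) p ↔ InDemazure z (crystalOp i C) p := by
  induction k with
  | zero => rfl
  | succ k ih =>
    obtain ⟨j, hj⟩ := h.crystalStep_iterate (Nat.lt_of_succ_lt hk)
    obtain ⟨j', hj'⟩ := h.crystalStep_iterate hk
    rw [← hj.inDemazure_iff hj', ih (Nat.lt_of_succ_lt hk)]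

lemma HasStringLength.inDemazure_of_iterate (h : HasStringLength C i r) (hk : k ≤ r)
    (hD : InDemazure z ((crystalOp i)^[k] C) p) : InDemazure z C p := by
  induction k with
  | zero => exact hD
  | succ k ih =>
    obtain ⟨j, hj⟩ := h.crystalStep_iterate hk
    exact ih (Nat.le_of_succ_le hk) (hj.inDemazure_source hD)

lemma HasStringLength.decreasingBound_iterate_iff (h : HasStringLength C i r) (hk : k ≤ r)
    (hv : v ≠ i + 1) :
    DecreasingBound ((crystalOp i)^[k] C) l v N ↔ DecreasingBound C l v N := by
  induction k with
  | zero => rfl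
  | succ k ih =>
    obtain ⟨j, hj⟩ := h.crystalStep_iterate hk
    rw [← hj.decreasingBound_iff hv, ih (Nat.le_of_succ_le hk)]

/-- In a head, each `i + 1` is followed by an `i`, which prolongs a decreasing set ending in
`i + 1`. -/
lemma IsStringHead.decreasingBound_succ (hhead : IsStringHead i C) (hC : EmptyBeyond M C)
    (hi : DecreasingBound C l i (N + 1)) (hi' : DecreasingBound C l (i + 2) N) :
    DecreasingBound C l (i + 1) N := by
  intro S hS
  have hletter := hS.le_letter
  by_cases hg : ∃ g, (g, i + 1) ∈ S
  · obtain ⟨g, hg⟩ := hg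
    have hgM : g < M + 1 := by
      by_contra! hgM
      have := hS.mem _ hg
      grind [hC g hgM]
    obtain ⟨b, hgb, -, hb⟩ := exists_mem_right_of_height_le hgM (hS.mem _ hg)
      (hhead.height_le hC g)
    have hcol := hS.le_col _ hg
    have hbS : (b, i) ∉ S := fun hbS => by grind
    have hinsert : DecreasingIn C l i (insert (b, i) S) := by
      obtain ⟨hScol, hSmem, -, hSlt⟩ := hS
      exact ⟨by grind, by grind, by grind, by grind⟩
    have hle := hi _ hinsert
    rw [card_insert_of_notMem hbS] at hle
    exact Nat.le_of_succ_le_succ hle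
  · exact hi' S { hS with le_letter := by grind }

lemma countGE_anti (p : ℕ → ℕ) (m : ℕ) (hvw : v ≤ w) : countGE p m w ≤ countGE p m v :=
  card_le_card (monotone_filter_right _ fun _ _ => hvw.trans)

lemma countGE_swap (p : ℕ → ℕ) (m : ℕ) (hv : v ≠ i + 1) :
    countGE (Equiv.swap i (i + 1) ∘ p) m v = countGE p m v := by
  simp only [countGE, Function.comp_apply, Equiv.swap_apply_def]
  congr 1
  grind

section Perm

variable {σ : Equiv.Perm ℕ}

lemma countGE_le_succ (σ : Equiv.Perm ℕ) (m i : ℕ) : countGE σ m i ≤ countGE σ m (i + 1) + 1 := by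
  refine (card_le_card (t := insert (σ.symm i) {t ∈ Icc 1 m | i + 1 ≤ σ t}) fun t ht => ?_).trans
    (card_insert_le _ _)
  by_cases hti : σ t = i
  · grind [σ.symm_apply_eq.2 hti.symm]
  · grind

lemma countGE_add_one_le_swap (hpos : 1 ≤ σ.symm i) (hm : σ.symm i ≤ m) :
    countGE σ m (i + 2) + 1 ≤ countGE (Equiv.swap i (i + 1) ∘ σ) m (i + 1) := by
  rw [countGE, ← card_insert_of_notMem (a := σ.symm i) (by simp)]
  refine card_le_card fun t ht => ?_
  obtain rfl | ht := mem_insert.1 ht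
  · simp [hpos, hm]
  · grind

lemma countGE_le_swap (hσ : σ.symm i < σ.symm (i + 1)) (hm : m < σ.symm i) :
    countGE σ m i ≤ countGE (Equiv.swap i (i + 1) ∘ σ) m (i + 1) := by
  refine card_le_card fun t ht => ?_
  have hti : σ t ≠ i := fun h => by grind [σ.symm_apply_eq.2 h.symm]
  have hti' : σ t ≠ i + 1 := fun h => by grind [σ.symm_apply_eq.2 h.symm]
  grind

lemma HasStringLength.inDemazure_swap_iterate (h : HasStringLength C i r)
    (hσ : σ.symm i < σ.symm (i + 1)) (hpos : 1 ≤ σ.symm i) (hk : k ≤ r)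
    (hD : InDemazure z C σ) :
    InDemazure z ((crystalOp i)^[k] C) (Equiv.swap i (i + 1) ∘ σ) := by
  intro l hl v
  have hbound : ∀ v, v ≠ i + 1 → DecreasingBound ((crystalOp i)^[k] C) l v (countGE σ (z l) v) :=
    fun v hv => (h.decreasingBound_iterate_iff hk hv).2 (hD l hl v)
  by_cases hv : v = i + 1
  · subst hv
    rcases le_or_gt (σ.symm i) (z l) with hm | hm
    · exact (hbound (i + 2) (by simp)).pred.mono (countGE_add_one_le_swap hpos hm)
    · exact ((hbound i (by simp)).of_le_letter (Nat.le_succ i)).mono (countGE_le_swap hσ hm)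
  · rw [countGE_swap _ _ hv]
    exact hbound v hv

lemma IsStringHead.inDemazure_of_swap_iterate (hhead : IsStringHead i C) (hC : EmptyBeyond M C)
    (h : HasStringLength C i r) (hk : k ≤ r)
    (hD : InDemazure z ((crystalOp i)^[k] C) (Equiv.swap i (i + 1) ∘ σ)) :
    InDemazure z C σ := by
  intro l hl v
  have hbound : ∀ v, v ≠ i + 1 → DecreasingBound C l v (countGE σ (z l) v) := by
    intro v hv
    rw [← h.decreasingBound_iterate_iff hk hv, ← countGE_swap σ (z l) hv]
    exact hD l hl v
  by_cases hv : v = i + 1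
  · subst hv
    exact hhead.decreasingBound_succ hC ((hbound i (by simp)).mono (countGE_le_succ σ _ i))
      ((hbound (i + 2) (by simp)).mono (countGE_anti _ _ (by simp)))
  · exact hbound v hv

lemma IsStringHead.inDemazure_swap_iterate_iff (hhead : IsStringHead i C) (hC : EmptyBeyond M C)
    (h : HasStringLength C i r) (hσ : σ.symm i < σ.symm (i + 1)) (hpos : 1 ≤ σ.symm i)
    (hk : k ≤ r) :
    InDemazure z ((crystalOp i)^[k] C) (Equiv.swap i (i + 1) ∘ σ) ↔ InDemazure z C σ :=
  ⟨hhead.inDemazure_of_swap_iterate hC h hk, h.inDemazure_swap_iterate hσ hpos hk⟩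

end Perm

end Demazure

/-! ### Weights and divided differences -/

section Weight

variable {i j k M r : ℕ} {C C' : ℕ → Finset ℕ}

/-- The weight monomial `x^T` of the tableau with columns `C 0, …, C M`. -/
def columnWeight (M : ℕ) (C : ℕ → Finset ℕ) : Poly := ∏ j ∈ range (M + 1), ∏ x ∈ C j, X x

lemma CrystalStep.X_mul_columnWeight (h : CrystalStep i C j C') (hC : EmptyBeyond M C) :
    X i * columnWeight M C' = X (i + 1) * columnWeight M C := by
  have hj : j ∈ range (M + 1) := by
    by_contra hj
    have := h.mem
    grind [hC j]
  have hrest : ∏ g ∈ (range (M + 1)).erase j, ∏ x ∈ C' g, (X x : Poly) =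
      ∏ g ∈ (range (M + 1)).erase j, ∏ x ∈ C g, X x :=
    prod_congr rfl fun g hg => by rw [h.eq_off (ne_of_mem_erase hg)]
  have hcol : X i * ∏ x ∈ C' j, (X x : Poly) = X (i + 1) * ∏ x ∈ C j, X x := by
    rw [h.eq_update, Function.update_self, prod_insert (by simp [h.succ_notMem]),
      ← mul_prod_erase (C j) _ h.mem]
    ring
  rw [columnWeight, columnWeight, ← mul_prod_erase _ _ hj,
    ← mul_prod_erase _ (fun g => ∏ x ∈ C g, _) hj, hrest, ← mul_assoc, hcol, mul_assoc]

lemma HasStringLength.emptyBeyond_iterate (h : HasStringLength C i r) (hC : EmptyBeyond M C)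
    (hk : k ≤ r) : EmptyBeyond M ((crystalOp i)^[k] C) := by
  induction k with
  | zero => exact hC
  | succ k ih =>
    obtain ⟨j, hj⟩ := h.crystalStep_iterate hk
    exact hj.emptyBeyond_iff.1 (ih (Nat.le_of_succ_le hk))

lemma HasStringLength.X_mul_columnWeight_iterate (h : HasStringLength C i r)
    (hC : EmptyBeyond M C) (hk : k < r) :
    X i * columnWeight M ((crystalOp i)^[k + 1] C) =
      X (i + 1) * columnWeight M ((crystalOp i)^[k] C) := by
  obtain ⟨j, hj⟩ := h.crystalStep_iterate hk
  exact hj.X_mul_columnWeight (h.emptyBeyond_iterate hC hk.le)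

lemma HasStringLength.X_pow_mul_columnWeight_iterate (h : HasStringLength C i r)
    (hC : EmptyBeyond M C) (hk : k ≤ r) :
    X i ^ k * columnWeight M ((crystalOp i)^[k] C) = X (i + 1) ^ k * columnWeight M C := by
  induction k with
  | zero => simp
  | succ k ih =>
    have hstep := h.X_mul_columnWeight_iterate hC hk
    rw [pow_succ, pow_succ]
    linear_combination X i ^ k * hstep + X (i + 1) * ih (Nat.le_of_succ_le hk)

lemma ite_mul_prod_X_swap (s : Finset ℕ) (i : ℕ) :
    (if i ∈ s then X i else 1) * (if i + 1 ∈ s then X (i + 1) else 1) *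
      ∏ x ∈ s, (X (Equiv.swap i (i + 1) x) : Poly) =
    (if i ∈ s then X (i + 1) else 1) * (if i + 1 ∈ s then X i else 1) * ∏ x ∈ s, X x := by
  have hite : ∀ (a : ℕ) (P : Poly), (if a ∈ s then P else 1) = ∏ x ∈ s, if x = a then P else 1 :=
    fun a P => by rw [prod_ite_eq']
  simp only [hite, ← prod_mul_distrib]
  refine prod_congr rfl fun x _ => ?_
  by_cases hi : x = i
  · simp [hi, mul_comm]
  by_cases hi' : x = i + 1
  · simp [hi', mul_comm]
  · simp [hi, hi', Equiv.swap_apply_of_ne_of_ne]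

lemma sOp_columnWeight (i M : ℕ) (C : ℕ → Finset ℕ) :
    sOp i (columnWeight M C) =
      ∏ j ∈ range (M + 1), ∏ x ∈ C j, X (Equiv.swap i (i + 1) x) := by
  simp [sOp, columnWeight, map_prod]

lemma height_eq_card_sub_card (C : ℕ → Finset ℕ) (i b : ℕ) :
    height C i b = #{j ∈ range b | i ∈ C j} - #{j ∈ range b | i + 1 ∈ C j} := by
  simp [height, signature, sum_sub_distrib]

lemma X_pow_mul_sOp_columnWeight (hr : height C i (M + 1) = r) :
    X i ^ r * sOp i (columnWeight M C) = X (i + 1) ^ r * columnWeight M C := by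
  rw [height_eq_card_sub_card] at hr
  have hprod := prod_congr (s₁ := range (M + 1)) rfl fun j _ => ite_mul_prod_X_swap (C j) i
  simp only [prod_mul_distrib, prod_ite, prod_const] at hprod
  rw [← sOp_columnWeight, ← columnWeight] at hprod
  set a := #{j ∈ range (M + 1) | i ∈ C j}
  set b := #{j ∈ range (M + 1) | i + 1 ∈ C j}
  rw [show a = b + r by grind, pow_add, pow_add] at hprod
  have hne : (X i : Poly) ^ b * X (i + 1) ^ b ≠ 0 :=
    mul_ne_zero (pow_ne_zero _ (X_ne_zero _)) (pow_ne_zero _ (X_ne_zero _))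
  exact mul_left_cancel₀ hne (by linear_combination hprod)

lemma IsStringHead.sOp_columnWeight (hhead : IsStringHead i C) (hC : EmptyBeyond M C)
    (h : HasStringLength C i r) :
    sOp i (columnWeight M C) = columnWeight M ((crystalOp i)^[r] C) := by
  have hswap := X_pow_mul_sOp_columnWeight ((hhead.hasStringLength_iff hC).1 h)
  rw [← h.X_pow_mul_columnWeight_iterate hC le_rfl] at hswap
  exact mul_left_cancel₀ (pow_ne_zero _ (X_ne_zero _)) hswap

/-- `Q` is the divided difference `ρ_i(P)`, expressed without division. -/
def IsDividedDifference (i : ℕ) (P Q : Poly) : Prop :=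
  (X i - X (i + 1)) * Q = X i * P - sOp i (X i * P)

lemma X_sub_X_succ_ne_zero (i : ℕ) : (X i - X (i + 1) : Poly) ≠ 0 :=
  sub_ne_zero.2 fun h => by simpa using X_injective h

lemma IsDividedDifference.rhoOp_eq {P Q : Poly} (h : IsDividedDifference i P Q) :
    rhoOp i P = Q := by
  have hex : ∃ Q : Poly, (X i - X (i + 1)) * Q = X i * P - sOp i (X i * P) := ⟨Q, h⟩
  rw [rhoOp, dif_pos hex]
  exact mul_left_cancel₀ (X_sub_X_succ_ne_zero i) (hex.choose_spec.trans h.symm)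

lemma sOp_mul (i : ℕ) (P Q : Poly) : sOp i (P * Q) = sOp i P * sOp i Q := map_mul _ P Q

lemma sOp_sub (i : ℕ) (P Q : Poly) : sOp i (P - Q) = sOp i P - sOp i Q := map_sub _ P Q

lemma sOp_X_self (i : ℕ) : sOp i (X i) = X (i + 1) := by simp [sOp]

lemma sOp_X_succ (i : ℕ) : sOp i (X (i + 1)) = X i := by simp [sOp]

lemma sOp_sOp (i : ℕ) (P : Poly) : sOp i (sOp i P) = P := by
  simp [sOp, rename_rename, ← Equiv.coe_trans]

lemma IsDividedDifference.self {P Q : Poly} (h : IsDividedDifference i P Q) :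
    IsDividedDifference i Q Q := by
  rw [IsDividedDifference] at h
  have hswap := congrArg (sOp i) h
  rw [sOp_mul, sOp_sub, sOp_sub, sOp_sOp, sOp_X_self, sOp_X_succ] at hswap
  have hsymm : sOp i Q = Q :=
    mul_left_cancel₀ (X_sub_X_succ_ne_zero i) (by linear_combination -hswap - h)
  rw [IsDividedDifference, sOp_mul, sOp_X_self, hsymm]
  ring

lemma isDividedDifference_zero (i : ℕ) : IsDividedDifference i 0 0 := by
  simp [IsDividedDifference, sOp]

lemma IsDividedDifference.sum {α : Type*} {s : Finset α} {P Q : α → Poly}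
    (h : ∀ a ∈ s, IsDividedDifference i (P a) (Q a)) :
    IsDividedDifference i (∑ a ∈ s, P a) (∑ a ∈ s, Q a) := by
  simp only [IsDividedDifference, sOp, mul_sum, map_sum, ← sum_sub_distrib] at h ⊢
  exact sum_congr rfl h

lemma HasStringLength.mul_sum_columnWeight_iterate (h : HasStringLength C i r)
    (hC : EmptyBeyond M C) (hk : k ≤ r) :
    (X i - X (i + 1)) * ∑ t ∈ range (k + 1), columnWeight M ((crystalOp i)^[t] C) =
      X i * columnWeight M C - X (i + 1) * columnWeight M ((crystalOp i)^[k] C) := by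
  induction k with
  | zero => simp [sub_mul]
  | succ k ih =>
    have hstep := h.X_mul_columnWeight_iterate hC hk
    rw [sum_range_succ, mul_add, ih (Nat.le_of_succ_le hk)]
    linear_combination hstep

lemma IsStringHead.isDividedDifference_columnWeight (hhead : IsStringHead i C)
    (hC : EmptyBeyond M C) (h : HasStringLength C i r) :
    IsDividedDifference i (columnWeight M C)
      (∑ k ∈ range (r + 1), columnWeight M ((crystalOp i)^[k] C)) := by
  rw [IsDividedDifference, sOp_mul, sOp_X_self, hhead.sOp_columnWeight hC h]
  exact h.mul_sum_columnWeight_iterate hC le_rfl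

end Weight

/-! ### Sums over Demazure sets -/

section DemazureSum

variable {i j k k' n M r r' : ℕ} {z p : ℕ → ℕ} {C C' : ℕ → Finset ℕ}

lemma finite_setOf_isColumnTableau (n M : ℕ) (z : ℕ → ℕ) :
    {C | IsColumnTableau n M z C}.Finite := by
  have hpi : {f : Fin (M + 1) → Finset ℕ | ∀ j, f j ∈ (Icc 1 n).powerset}.Finite :=
    Set.Finite.pi' fun _ => finite_toSet _
  refine Set.Finite.of_injOn (f := fun C (j : Fin (M + 1)) => C j) ?_ ?_ hpi
  · intro C hC j
    exact mem_powerset.2 (hC.subset j)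
  · intro C hC C' hC' h
    funext j
    by_cases hj : j < M + 1
    · exact congrFun h ⟨j, hj⟩
    · rw [hC.emptyBeyond j (by grind), hC'.emptyBeyond j (by grind)]

/-- The set of all tableaux, encoded by their columns, with column lengths `z`. -/
def columnTableaux (n M : ℕ) (z : ℕ → ℕ) : Finset (ℕ → Finset ℕ) :=
  (finite_setOf_isColumnTableau n M z).toFinset

lemma mem_columnTableaux : C ∈ columnTableaux n M z ↔ IsColumnTableau n M z C :=
  Set.Finite.mem_toFinset _

/-- The number of times `f_i` can be applied to `C`. -/
def stringLength (i : ℕ) (C : ℕ → Finset ℕ) : ℕ :=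
  if h : ∃ r, HasStringLength C i r then h.choose else 0

lemma EmptyBeyond.hasStringLength (hC : EmptyBeyond M C) (i : ℕ) :
    HasStringLength C i (stringLength i C) := by
  have hex := hC.exists_hasStringLength i
  rw [stringLength, dif_pos hex]
  exact hex.choose_spec

lemma height_le_self (C : ℕ → Finset ℕ) (i b : ℕ) : height C i b ≤ b := by
  calc height C i b ≤ ∑ _h ∈ range b, (1 : ℤ) := sum_le_sum fun h _ => signature_le_one C i h
    _ = b := by simp

lemma HasStringLength.le (h : HasStringLength C i r) (hC : EmptyBeyond M C) : r ≤ M + 1 := by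
  obtain ⟨a, ha, hmax⟩ := hC.exists_max i
  have hra : (r : ℤ) = height C i a := IsGreatest.unique h (isGreatest_height hmax)
  grind [height_le_self C i a]

lemma IsColumnTableau.exists_head (hC : IsColumnTableau n M z C) (hi : 1 ≤ i) :
    ∃ C₀ k, IsColumnTableau n M z C₀ ∧ IsStringHead i C₀ ∧ k ≤ stringLength i C₀ ∧
      (crystalOp i)^[k] C₀ = C := by
  induction hd : M + 1 - stringLength i C using Nat.strong_induction_on generalizing C with
  | _ d ih =>
    by_cases hhead : IsStringHead i C
    · exact ⟨C, 0, hC, hhead, Nat.zero_le _, rfl⟩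
    · simp only [IsStringHead, not_forall, not_not] at hhead
      obtain ⟨j, C₁, hstep⟩ := hhead
      have hC₁ := hstep.isColumnTableau_source hi hC
      have hlength : stringLength i C₁ = stringLength i C + 1 :=
        (hC₁.emptyBeyond.hasStringLength i).unique
          (hstep.hasStringLength_source (hC.emptyBeyond.hasStringLength i))
      have hle := (hC₁.emptyBeyond.hasStringLength i).le hC₁.emptyBeyond
      obtain ⟨C₀, k, hC₀, hhead₀, hk, rfl⟩ := ih _ (by grind) hC₁ rfl
      have hrest := ((hC₀.emptyBeyond.hasStringLength i).iterate hk).unique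
        (hC₁.emptyBeyond.hasStringLength i)
      refine ⟨C₀, k + 1, hC₀, hhead₀, by grind, ?_⟩
      rw [Function.iterate_succ_apply', hstep.crystalOp_eq]

lemma IsStringHead.eq_of_iterate_eq (hhead : IsStringHead i C) (hhead' : IsStringHead i C')
    (hr : HasStringLength C i r) (hr' : HasStringLength C' i r') (hk : k ≤ r) (hk' : k' ≤ r')
    (heq : (crystalOp i)^[k] C = (crystalOp i)^[k'] C') : C = C' ∧ k = k' := by
  induction k generalizing k' with
  | zero =>
    obtain _ | k' := k'
    · exact ⟨heq, rfl⟩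
    · obtain ⟨j, hj⟩ := hr'.crystalStep_iterate hk'
      exact absurd (heq ▸ hj) (hhead j _)
  | succ k ih =>
    obtain ⟨j, hj⟩ := hr.crystalStep_iterate hk
    obtain _ | k' := k'
    · exact absurd (heq ▸ hj) (hhead' j _)
    · obtain ⟨j', hj'⟩ := hr'.crystalStep_iterate hk'
      have hpred := ih (Nat.le_of_succ_le hk) (Nat.le_of_succ_le hk')
        (CrystalStep.source_unique (heq ▸ hj) hj')
      exact ⟨hpred.1, congrArg (· + 1) hpred.2⟩

lemma IsColumnTableau.iterate (hC : IsColumnTableau n M z C) (hin : i + 1 ≤ n)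
    (h : HasStringLength C i r) (hk : k ≤ r) : IsColumnTableau n M z ((crystalOp i)^[k] C) := by
  induction k with
  | zero => exact hC
  | succ k ih =>
    obtain ⟨j, hj⟩ := h.crystalStep_iterate hk
    exact hj.isColumnTableau_target hin (ih (Nat.le_of_succ_le hk))

lemma sum_columnTableaux_eq_sum_strings {A : Type*} [AddCommMonoid A] (hi : 1 ≤ i)
    (hin : i + 1 ≤ n) (g : (ℕ → Finset ℕ) → A) :
    ∑ C ∈ columnTableaux n M z, g C =
      ∑ C ∈ columnTableaux n M z with IsStringHead i C,
        ∑ k ∈ range (stringLength i C + 1), g ((crystalOp i)^[k] C) := by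
  rw [sum_sigma', eq_comm]
  refine sum_bij (fun x _ => (crystalOp i)^[x.2] x.1) (fun x hx => ?_) (fun x hx y hy h => ?_)
    (fun C hC => ?_) fun x _ => rfl
  · simp only [mem_sigma, mem_filter, mem_range, mem_columnTableaux] at hx ⊢
    obtain ⟨⟨hC, -⟩, hk⟩ := hx
    exact hC.iterate hin (hC.emptyBeyond.hasStringLength i) (Nat.le_of_lt_succ hk)
  · simp only [mem_sigma, mem_filter, mem_range, mem_columnTableaux] at hx hy
    obtain ⟨⟨hC, hhead⟩, hk⟩ := hx
    obtain ⟨⟨hC', hhead'⟩, hk'⟩ := hy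
    have heq := hhead.eq_of_iterate_eq hhead' (hC.emptyBeyond.hasStringLength i)
      (hC'.emptyBeyond.hasStringLength i) (Nat.le_of_lt_succ hk) (Nat.le_of_lt_succ hk') h
    exact Sigma.ext heq.1 (heq_of_eq heq.2)
  · obtain ⟨C₀, k, hC₀, hhead, hk, rfl⟩ := (mem_columnTableaux.1 hC).exists_head hi
    refine ⟨⟨C₀, k⟩, ?_, rfl⟩
    simp only [mem_sigma, mem_filter, mem_range, mem_columnTableaux]
    exact ⟨⟨hC₀, hhead⟩, Nat.lt_succ_of_le hk⟩

/-- The sum of the weights of the tableaux in the Demazure set of `p`. -/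
def demazureSum (n M : ℕ) (z p : ℕ → ℕ) : Poly :=
  ∑ C ∈ columnTableaux n M z with InDemazure z C p, columnWeight M C

lemma IsStringHead.isDividedDifference_sum_demazure {σ : Equiv.Perm ℕ}
    (hhead : IsStringHead i C) (hC : EmptyBeyond M C) (h : HasStringLength C i r)
    (hσ : σ.symm i < σ.symm (i + 1)) (hpos : 1 ≤ σ.symm i) :
    IsDividedDifference i
      (∑ k ∈ range (r + 1), if InDemazure z ((crystalOp i)^[k] C) σ then
        columnWeight M ((crystalOp i)^[k] C) else 0)
      (∑ k ∈ range (r + 1), if InDemazure z ((crystalOp i)^[k] C) (Equiv.swap i (i + 1) ∘ σ) then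
        columnWeight M ((crystalOp i)^[k] C) else 0) := by
  rw [sum_congr rfl fun k hk => if_congr (hhead.inDemazure_swap_iterate_iff hC h hσ hpos
    (mem_range_succ_iff.1 hk)) rfl rfl]
  have hstring := hhead.isDividedDifference_columnWeight hC h
  by_cases hD : InDemazure z C σ
  · simp only [hD, if_true]
    rw [sum_range_succ', sum_congr rfl fun k hk => if_congr (h.inDemazure_iterate_succ_iff
      (mem_range.1 hk)) rfl rfl]
    by_cases hD₁ : InDemazure z (crystalOp i C) σ
    · simp only [Function.iterate_zero, id_eq, hD, hD₁, if_true]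
      have hself := hstring.self
      rwa [sum_range_succ'] at hself ⊢
    · simpa only [Function.iterate_zero, id_eq, hD, hD₁, if_true, if_false, sum_const_zero,
        zero_add] using hstring
  · simp only [hD, if_false, sum_const_zero]
    rw [sum_eq_zero fun k hk => if_neg fun hk' =>
      hD (h.inDemazure_of_iterate (mem_range_succ_iff.1 hk) hk')]
    exact isDividedDifference_zero i

lemma rhoOp_demazureSum {σ : Equiv.Perm ℕ} (hi : 1 ≤ i) (hin : i + 1 ≤ n)
    (hσ : σ.symm i < σ.symm (i + 1)) (hpos : 1 ≤ σ.symm i) :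
    rhoOp i (demazureSum n M z σ) = demazureSum n M z (Equiv.swap i (i + 1) ∘ σ) := by
  apply IsDividedDifference.rhoOp_eq
  simp only [demazureSum, sum_filter (InDemazure z · _)]
  rw [sum_columnTableaux_eq_sum_strings hi hin, sum_columnTableaux_eq_sum_strings hi hin]
  refine IsDividedDifference.sum fun C hC => ?_
  obtain ⟨hC, hhead⟩ := mem_filter.1 hC
  have hempty := (mem_columnTableaux.1 hC).emptyBeyond
  exact hhead.isDividedDifference_sum_demazure hempty (hempty.hasStringLength i) hσ hpos

end DemazureSum

/-! ### Reduced words -/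

section Word

variable {n M i a b : ℕ} {z p : ℕ → ℕ} {w : List ℕ}

/-- The permutation `s_{i_t} ⋯ s_{i_1}` of a word `[i_t, …, i_1]`. -/
def wordPerm (w : List ℕ) : Equiv.Perm ℕ := (w.map fun i => Equiv.swap i (i + 1)).prod

@[simp]
lemma wordPerm_cons (i : ℕ) (w : List ℕ) :
    wordPerm (i :: w) = Equiv.swap i (i + 1) * wordPerm w := by
  simp [wordPerm]

lemma swapVal_eq_swap (i : ℕ) : swapVal i = Equiv.swap i (i + 1) :=
  funext fun v => by rw [Equiv.swap_apply_def, swapVal]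

lemma permOfWord_eq_wordPerm (w : List ℕ) : permOfWord w = wordPerm w := by
  induction w with
  | nil => rfl
  | cons i w ih =>
    rw [wordPerm_cons, Equiv.Perm.coe_mul, ← ih, ← swapVal_eq_swap]
    rfl

lemma exists_wordPerm_eq_swap_mul (hab : a < b)
    (h : (wordPerm w).symm b < (wordPerm w).symm a) :
    ∃ w', w' ⊆ w ∧ w'.length < w.length ∧ Equiv.swap a b * wordPerm w = wordPerm w' := by
  induction w generalizing a b with
  | nil => exact absurd h (not_lt.2 hab.le)
  | cons c u ih =>
    by_cases hc : a = c ∧ b = c + 1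
    · obtain ⟨rfl, rfl⟩ := hc
      exact ⟨u, List.subset_cons_self _ _, by simp, by simp [wordPerm_cons]⟩
    · have hlt : Equiv.swap c (c + 1) a < Equiv.swap c (c + 1) b := by grind
      have hsymm : ∀ x, (wordPerm (c :: u)).symm x =
          (wordPerm u).symm (Equiv.swap c (c + 1) x) := fun x => by
        simp [wordPerm_cons, Equiv.symm_apply_eq]
      rw [hsymm, hsymm] at h
      obtain ⟨u', hsub, hlength, heq⟩ := ih hlt h
      refine ⟨c :: u', List.cons_subset_cons c hsub, by simpa using hlength, ?_⟩
      rw [wordPerm_cons, wordPerm_cons, ← heq, ← mul_assoc, ← mul_assoc,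
        Equiv.mul_swap_eq_swap_mul (Equiv.swap c (c + 1)) (Equiv.swap c (c + 1) a)
          (Equiv.swap c (c + 1) b)]
      simp

lemma wordPerm_zero (h : ∀ i ∈ w, 1 ≤ i) : wordPerm w 0 = 0 := by
  induction w with
  | nil => rfl
  | cons i w ih =>
    have hi := h i List.mem_cons_self
    rw [wordPerm_cons, Equiv.Perm.mul_apply, ih fun j hj => h j (List.mem_cons_of_mem i hj)]
    grind

lemma WordFor.symm_pos (hw : WordFor n w p) (hi : 1 ≤ i) : 1 ≤ (wordPerm w).symm i := by
  have hzero := wordPerm_zero fun j hj => (hw.1 j hj).1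
  rw [Nat.one_le_iff_ne_zero, ne_eq, Equiv.symm_apply_eq, hzero]
  exact Nat.ne_zero_of_lt hi

lemma WordFor.tail (hw : WordFor n (i :: w) p) : WordFor n w (wordPerm w) :=
  ⟨fun j hj => hw.1 j (List.mem_cons_of_mem i hj), fun t _ _ => by rw [permOfWord_eq_wordPerm]⟩

lemma IsReducedWord.tail (h : IsReducedWord n (i :: w) p) : IsReducedWord n w (wordPerm w) := by
  obtain ⟨hw, hmin⟩ := h
  refine ⟨hw.tail, fun v hv => ?_⟩
  have hcons : WordFor n (i :: v) p := by
    refine ⟨?_, fun t ht htn => ?_⟩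
    · exact List.forall_mem_cons.2 ⟨hw.1 i List.mem_cons_self, hv.1⟩
    · rw [← hw.2 t ht htn]
      exact congrArg (swapVal i)
        ((hv.2 t ht htn).trans (congrFun (permOfWord_eq_wordPerm w) t).symm)
  simpa using hmin _ hcons

lemma IsReducedWord.symm_lt_symm_succ (h : IsReducedWord n (i :: w) p) :
    (wordPerm w).symm i < (wordPerm w).symm (i + 1) := by
  obtain ⟨hw, hmin⟩ := h
  by_contra! hle
  have hlt := hle.lt_of_ne ((wordPerm w).symm.injective.ne (Nat.succ_ne_self i))
  obtain ⟨w', hsub, hlength, heq⟩ := exists_wordPerm_eq_swap_mul (Nat.lt_succ_self i) hlt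
  have hw' : WordFor n w' p := by
    refine ⟨fun j hj => hw.tail.1 j (hsub hj), fun t ht htn => ?_⟩
    rw [← hw.2 t ht htn, permOfWord_eq_wordPerm, permOfWord_eq_wordPerm, ← heq, wordPerm_cons]
  have hle := hmin w' hw'
  rw [List.length_cons] at hle
  grind

lemma applyOps_demazureSum (h : IsReducedWord n w p) :
    applyOps rhoOp w (demazureSum n M z id) = demazureSum n M z (wordPerm w) := by
  induction w generalizing p with
  | nil => rfl
  | cons i w ih =>
    have hi := h.1.1 i List.mem_cons_self
    rw [applyOps, ih h.tail, rhoOp_demazureSum hi.1 hi.2 h.symm_lt_symm_succ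
      (h.1.tail.symm_pos hi.1), wordPerm_cons, Equiv.Perm.coe_mul]

end Word

/-! ### The identity permutation -/

section Identity

variable {n i j j' : ℕ} (lam : NPartition n) {p q : ℕ → ℕ} {C : ℕ → Finset ℕ} {w : List ℕ}

/-- The column lengths of `λ`, set to `0` in the nonexistent column `0`. -/
def columnLength (lam : NPartition n) (j : ℕ) : ℕ := if j = 0 then 0 else zeta lam j

lemma columnLength_of_pos (hj : 1 ≤ j) : columnLength lam j = zeta lam j :=
  if_neg (Nat.ne_zero_of_lt hj)

lemma le_zeta_iff (hi : 1 ≤ i) : i ≤ zeta lam j ↔ i ≤ n ∧ j ≤ lam.part i := by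
  refine ⟨fun h => ?_, fun h => ?_⟩
  · by_contra hout
    have hsub : {t ∈ Icc 1 n | j ≤ lam.part t} ⊆ Icc 1 (i - 1) := fun t ht => by
      simp only [mem_filter, mem_Icc] at ht ⊢
      by_contra htop
      have hanti := lam.antitone hi (show i ≤ t by lia)
      lia
    have hcard := card_le_card hsub
    rw [Nat.card_Icc] at hcard
    grind [zeta]
  · have hsub : Icc 1 i ⊆ {t ∈ Icc 1 n | j ≤ lam.part t} := fun t ht => by
      rw [mem_Icc] at ht
      exact mem_filter.2 ⟨mem_Icc.2 ⟨ht.1, ht.2.trans h.1⟩, h.2.trans (lam.antitone ht.1 ht.2)⟩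
    simpa [zeta] using card_le_card hsub

lemma mem_Icc_columnLength : i ∈ Icc 1 (columnLength lam j) ↔ InShape lam j i := by
  by_cases hi : 1 ≤ i
  · have h := le_zeta_iff lam hi (j := j)
    grind [InShape, columnLength]
  · grind [InShape]

lemma zeta_le : zeta lam j ≤ n := (card_filter_le _ _).trans_eq (by simp)

lemma columnLength_le : columnLength lam j ≤ n := by
  grind [columnLength, zeta_le]

lemma zeta_anti (h : j ≤ j') : zeta lam j' ≤ zeta lam j :=
  card_le_card (monotone_filter_right _ fun _ _ => h.trans)

lemma columnLength_anti (hj : 1 ≤ j) (h : j ≤ j') : columnLength lam j' ≤ columnLength lam j := by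
  rw [columnLength_of_pos lam hj, columnLength_of_pos lam (hj.trans h)]
  exact zeta_anti lam h

lemma zeta_eq_zero (hj : lam.part 1 < j) : zeta lam j = 0 := by
  grind [le_zeta_iff lam (i := 1) (j := j) le_rfl]

lemma columnLength_eq_zero (hj : lam.part 1 < j) : columnLength lam j = 0 := by
  grind [columnLength, zeta_eq_zero lam hj]

/-- The columns of the tableau of shape `λ` all of whose entries in row `i` are `i`. -/
def yamanouchi (lam : NPartition n) (j : ℕ) : Finset ℕ := Icc 1 (columnLength lam j)

lemma isColumnTableau_yamanouchi :
    IsColumnTableau n (lam.part 1) (columnLength lam) (yamanouchi lam) where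
  subset _ := Icc_subset_Icc_right (columnLength_le lam)
  card_eq _ := by simp [yamanouchi]
  countLT_le j hj v := card_le_card <| filter_subset_filter _ <| Icc_subset_Icc_right <|
    columnLength_anti lam hj j.le_succ
  emptyBeyond j hj := by simp [yamanouchi, columnLength_eq_zero lam hj]

lemma columnWeight_yamanouchi : columnWeight (lam.part 1) (yamanouchi lam) = lamMonomial lam := by
  have hpow : ∀ i ∈ Icc 1 n, (X i : Poly) ^ lam.part i = ∏ _j ∈ Icc 1 (lam.part i), X i :=
    fun i _ => by simp
  rw [columnWeight, lamMonomial, prod_congr rfl hpow]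
  refine prod_comm' fun j i => ?_
  rw [yamanouchi, mem_Icc_columnLength]
  simp only [InShape, mem_range, mem_Icc]
  refine ⟨fun h => by lia, fun h => ?_⟩
  have hanti := lam.antitone le_rfl h.2.1
  lia

lemma inDemazure_yamanouchi : InDemazure (columnLength lam) (yamanouchi lam) id := by
  intro l hl v S hS
  rw [← card_image_of_injOn hS.injOn_snd]
  refine card_le_card fun x hx => ?_
  obtain ⟨b, hb, rfl⟩ := mem_image.1 hx
  have hcol := columnLength_anti lam hl (hS.le_col b hb)
  grind [hS.mem b hb, hS.le_letter b hb, yamanouchi]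

variable {lam}

lemma InDemazure.eq_yamanouchi (hD : InDemazure (columnLength lam) C id)
    (hC : IsColumnTableau n (lam.part 1) (columnLength lam) C) : C = yamanouchi lam := by
  funext l
  refine eq_of_subset_of_card_le (fun x hx => ?_) (by simp [yamanouchi, hC.card_eq])
  have hl : 1 ≤ l := Nat.one_le_iff_ne_zero.2 fun hl => by
    have hcard := hC.card_eq l
    grind [columnLength]
  by_contra hout
  have hsingle : DecreasingIn C l (columnLength lam l + 1) {(l, x)} := by
    grind [DecreasingIn, yamanouchi, hC.subset l hx]
  have hcount : countGE id (columnLength lam l) (columnLength lam l + 1) = 0 := by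
    rw [countGE, card_eq_zero, filter_eq_empty_iff]
    grind
  have hle := hD l hl _ _ hsingle
  rw [card_singleton, hcount] at hle
  exact absurd hle (by simp)

variable (lam)

lemma demazureSum_id :
    demazureSum n (lam.part 1) (columnLength lam) id = lamMonomial lam := by
  have hfilter : {C ∈ columnTableaux n (lam.part 1) (columnLength lam) |
      InDemazure (columnLength lam) C id} = {yamanouchi lam} := by
    ext C
    simp only [mem_filter, mem_columnTableaux, mem_singleton]
    refine ⟨fun h => h.2.eq_yamanouchi h.1, ?_⟩
    rintro rfl
    exact ⟨isColumnTableau_yamanouchi lam, inDemazure_yamanouchi lam⟩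
  rw [demazureSum, hfilter, sum_singleton, columnWeight_yamanouchi]

lemma demazureSum_congr (h : ∀ t, 1 ≤ t → t ≤ n → p t = q t) (M : ℕ) :
    demazureSum n M (columnLength lam) p = demazureSum n M (columnLength lam) q := by
  have hcount : ∀ l v, countGE p (columnLength lam l) v = countGE q (columnLength lam l) v := by
    intro l v
    refine congrArg card (filter_congr fun t ht => ?_)
    rw [mem_Icc] at ht
    rw [h t ht.1 (ht.2.trans (columnLength_le lam))]
  rw [demazureSum, demazureSum]
  exact sum_congr (filter_congr fun C _ => by simp only [InDemazure, hcount]) fun _ _ => rfl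

lemma IsReducedWord.applyOps_lamMonomial (hw : IsReducedWord n w p) :
    applyOps rhoOp w (lamMonomial lam) = demazureSum n (lam.part 1) (columnLength lam) p := by
  rw [← demazureSum_id, applyOps_demazureSum hw]
  refine demazureSum_congr lam (fun t ht htn => ?_) _
  rw [← permOfWord_eq_wordPerm, hw.1.2 t ht htn]

end Identity

/-! ### Scanning paths -/

section ScanningPath

variable {T : ℕ → ℕ → ℕ} {c : ℕ → ℕ} {M N fuel g h h' l : ℕ}

lemma nextCol_eq_some_iff :
    nextCol T c M h = some h' ↔ h < h' ∧ h' ≤ M ∧ 0 < c h' ∧ T h (c h) ≤ T h' (c h') ∧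
      ∀ g, h < g → g < h' → 0 < c g → T g (c g) < T h (c h) := by
  simp only [nextCol, List.find?_range'_eq_some, List.mem_range'_1, decide_eq_true_eq,
    Bool.not_eq_true', decide_eq_false_iff_not]
  grind

lemma nextCol_eq_none_iff :
    nextCol T c M h = none ↔
      ∀ g, h < g → g ≤ M → 0 < c g → T g (c g) < T h (c h) := by
  simp only [nextCol, List.find?_range'_eq_none, Bool.not_eq_true', decide_eq_false_iff_not]
  grind

lemma mem_pathColsAux_succ :
    g ∈ pathColsAux T c M (fuel + 1) h ↔
      g = h ∨ ∃ h', nextCol T c M h = some h' ∧ g ∈ pathColsAux T c M fuel h' := by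
  rw [pathColsAux]
  split <;> simp [*]

lemma self_mem_pathColsAux : h ∈ pathColsAux T c M fuel h := by
  cases fuel with
  | zero => exact List.mem_singleton_self h
  | succ fuel => exact mem_pathColsAux_succ.2 (Or.inl rfl)

lemma eq_or_lt_of_mem_pathColsAux (hg : g ∈ pathColsAux T c M fuel h) :
    g = h ∨ h < g ∧ 0 < c g := by
  induction fuel generalizing h with
  | zero => exact Or.inl (List.mem_singleton.1 hg)
  | succ fuel ih =>
    obtain rfl | ⟨h', hnext, hg'⟩ := mem_pathColsAux_succ.1 hg
    · exact Or.inl rfl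
    · grind [nextCol_eq_some_iff.1 hnext, ih hg']

lemma bottom_le_of_mem_pathColsAux (hg : g ∈ pathColsAux T c M fuel h) :
    T h (c h) ≤ T g (c g) := by
  induction fuel generalizing h with
  | zero => rw [List.mem_singleton.1 hg]
  | succ fuel ih =>
    obtain rfl | ⟨h', hnext, hg'⟩ := mem_pathColsAux_succ.1 hg
    · exact le_rfl
    · exact (nextCol_eq_some_iff.1 hnext).2.2.2.1.trans (ih hg')

lemma monotoneOn_bottom_pathColsAux :
    MonotoneOn (fun g => T g (c g)) {g | g ∈ pathColsAux T c M fuel h} := by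
  induction fuel generalizing h with
  | zero =>
    intro g hg g' hg' _
    rw [List.mem_singleton.1 hg, List.mem_singleton.1 hg']
  | succ fuel ih =>
    intro g hg g' hg' hgg'
    obtain rfl | ⟨h₁, hnext, hg₁⟩ := mem_pathColsAux_succ.1 hg
    · exact bottom_le_of_mem_pathColsAux hg'
    · obtain rfl | ⟨h₂, hnext', hg₂⟩ := mem_pathColsAux_succ.1 hg'
      · grind [nextCol_eq_some_iff.1 hnext, eq_or_lt_of_mem_pathColsAux hg₁]
      · obtain rfl : h₁ = h₂ := Option.some_injective _ (hnext.symm.trans hnext')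
        exact ih hg₁ hg₂ hgg'

lemma exists_bottom_lt_of_notMem_pathColsAux (hM : M ≤ h + fuel) (hhg : h < g) (hgM : g ≤ M)
    (hpos : 0 < c g) (hg : g ∉ pathColsAux T c M fuel h) :
    ∃ g₀ ∈ pathColsAux T c M fuel h, g₀ < g ∧ T g (c g) < T g₀ (c g₀) := by
  induction fuel generalizing h with
  | zero => exact absurd hM (by lia)
  | succ fuel ih =>
    by_cases hlt : T g (c g) < T h (c h)
    · exact ⟨h, self_mem_pathColsAux, hhg, hlt⟩
    obtain hnext | ⟨h', hnext⟩ := (nextCol T c M h).eq_none_or_eq_some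
    · exact absurd (nextCol_eq_none_iff.1 hnext g hhg hgM hpos) hlt
    · have hspec := nextCol_eq_some_iff.1 hnext
      have hg' : g ∉ pathColsAux T c M fuel h' := fun hg' =>
        hg (mem_pathColsAux_succ.2 (Or.inr ⟨h', hnext, hg'⟩))
      have hne : g ≠ h' := fun heq => hg' (heq ▸ self_mem_pathColsAux)
      obtain ⟨g₀, hg₀, hbetween⟩ := ih (by lia) (by grind) hg'
      exact ⟨g₀, mem_pathColsAux_succ.2 (Or.inr ⟨h', hnext, hg₀⟩), hbetween⟩

lemma mEast_le_iff :
    mEast T c M l ≤ N ↔ 1 ≤ N ∧ ∀ h, l < h → h ≤ M → 0 < c h → T h (c h) ≤ N := by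
  simp only [mEast, max_le_iff, Finset.sup_le_iff, mem_filter, mem_Icc, Nat.succ_le_iff, and_imp]

end ScanningPath

section Remnant

variable {n : ℕ} {lam : NPartition n} {T : ℕ → ℕ → ℕ} {g h l r y y' : ℕ}

/-- The column lengths of `T` after removing `r` scanning paths starting in column `l`. -/
def remnantAfter (lam : NPartition n) (T : ℕ → ℕ → ℕ) (l r : ℕ) : ℕ → ℕ :=
  remnantIter T (zeta lam) (lam.part 1) l r

/-- The columns of the scanning path starting in column `l` after `r` such paths were removed. -/
def pathAfter (lam : NPartition n) (T : ℕ → ℕ → ℕ) (l r : ℕ) : List ℕ :=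
  pathCols T (remnantAfter lam T l r) (lam.part 1) l

lemma self_mem_pathAfter : l ∈ pathAfter lam T l r := self_mem_pathColsAux

lemma remnantAfter_succ (lam : NPartition n) (T : ℕ → ℕ → ℕ) (l r h : ℕ) :
    remnantAfter lam T l (r + 1) h =
      if h ∈ pathAfter lam T l r then remnantAfter lam T l r h - 1
      else remnantAfter lam T l r h := rfl

lemma inShape_iff_le_zeta (hh : 1 ≤ h) (hy : 1 ≤ y) : InShape lam h y ↔ y ≤ zeta lam h := by
  rw [le_zeta_iff lam hy]
  grind [InShape]

lemma InShape.of_le (hh : InShape lam h y') (hg : 1 ≤ g) (hgh : g ≤ h) (hy : 1 ≤ y)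
    (hyy' : y ≤ y') : InShape lam g y :=
  (inShape_iff_le_zeta hg hy).2 <| hyy'.trans <|
    ((inShape_iff_le_zeta hh.1 hh.2.1).1 hh).trans (zeta_anti lam hgh)

lemma remnantAfter_le_zeta : remnantAfter lam T l r h ≤ zeta lam h := by
  induction r with
  | zero => exact le_rfl
  | succ r ih => grind [remnantAfter_succ lam T l r h]

lemma remnantAfter_self (lam : NPartition n) (T : ℕ → ℕ → ℕ) (l r : ℕ) :
    remnantAfter lam T l r l = zeta lam l - r := by
  induction r with
  | zero => rfl
  | succ r ih => rw [remnantAfter_succ, if_pos self_mem_pathAfter, ih, Nat.sub_sub]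

lemma le_part_one_of_remnantAfter_pos (hpos : 0 < remnantAfter lam T l r h) :
    h ≤ lam.part 1 := by
  by_contra! hh
  have hzero := zeta_eq_zero lam hh
  have hle := remnantAfter_le_zeta (lam := lam) (T := T) (l := l) (r := r) (h := h)
  lia

lemma inShape_of_le_remnantAfter (hh : 1 ≤ h) (hy : 1 ≤ y) (hyr : y ≤ remnantAfter lam T l r h) :
    InShape lam h y :=
  (inShape_iff_le_zeta hh hy).2 (hyr.trans remnantAfter_le_zeta)

lemma exists_bottom_lt_of_notMem_pathAfter (hlh : l ≤ h) (hl : 0 < remnantAfter lam T l r l)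
    (hpos : 0 < remnantAfter lam T l r h) (hh : h ∉ pathAfter lam T l r) :
    ∃ g, l ≤ g ∧ g < h ∧ 0 < remnantAfter lam T l r g ∧
      T h (remnantAfter lam T l r h) < T g (remnantAfter lam T l r g) := by
  have hne : l ≠ h := fun heq => hh (heq ▸ self_mem_pathAfter)
  obtain ⟨g, hg, hgh, hlt⟩ := exists_bottom_lt_of_notMem_pathColsAux (Nat.le_add_left _ _)
    (hlh.lt_of_ne hne) (le_part_one_of_remnantAfter_pos hpos) hpos hh
  obtain rfl | ⟨hlg, hgpos⟩ := eq_or_lt_of_mem_pathColsAux hg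
  · exact ⟨g, le_rfl, hgh, hl, hlt⟩
  · exact ⟨g, hlg.le, hgh, hgpos, hlt⟩

end Remnant

/-! ### Scanning paths and decreasing sets -/

section Duality

variable {n : ℕ} {lam : NPartition n} {T : ℕ → ℕ → ℕ} {h j k l r x y v : ℕ}

lemma IsSSYT.strictMonoOn (hT : IsSSYT lam T) (j : ℕ) :
    StrictMonoOn (T j) (Icc 1 (columnLength lam j) : Finset ℕ) := by
  rw [coe_Icc]
  refine strictMonoOn_of_lt_add_one Set.ordConnected_Icc fun k _ _ hk => hT.2.2 j k ?_
  rwa [← mem_Icc_columnLength, ← mem_coe, coe_Icc]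

lemma IsSSYT.lt_of_row_lt (hT : IsSSYT lam T) (hy : 1 ≤ y) (hyk : y < k) (hk : InShape lam j k) :
    T j y < T j k := by
  have hk' := (mem_Icc_columnLength lam).2 hk
  exact hT.strictMonoOn j (by grind) (mem_coe.2 hk') hyk

lemma IsSSYT.le_of_row_le (hT : IsSSYT lam T) (hy : 1 ≤ y) (hyk : y ≤ k) (hk : InShape lam j k) :
    T j y ≤ T j k := by
  obtain rfl | hlt := hyk.eq_or_lt
  · exact le_rfl
  · exact (hT.lt_of_row_lt hy hlt hk).le

lemma IsSSYT.le_of_col_le (hT : IsSSYT lam T) (hj : 1 ≤ j) (hjh : j ≤ h) (hk : InShape lam h k) :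
    T j k ≤ T h k := by
  induction h, hjh using Nat.le_induction with
  | base => exact le_rfl
  | succ h hjh ih =>
    exact (ih (hk.of_le (hj.trans hjh) h.le_succ hk.2.1 le_rfl)).trans (hT.2.1 h k hk)

lemma IsSSYT.row_le_entry (hT : IsSSYT lam T) (hk : InShape lam l k) : k ≤ T l k := by
  induction k with
  | zero => exact Nat.zero_le _
  | succ k ih =>
    obtain rfl | hpos := k.eq_zero_or_pos
    · exact (hT.1 l 1 hk).1
    · exact (ih (hk.of_le hk.1 le_rfl hpos k.le_succ)).trans_lt (hT.2.2 l k hk)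

lemma IsSSYT.remnantAfter_le_self (hT : IsSSYT lam T) (hl : 1 ≤ l) (r : ℕ) (hlh : l ≤ h) :
    remnantAfter lam T l r h ≤ remnantAfter lam T l r l := by
  induction r generalizing h with
  | zero => exact zeta_anti lam hlh
  | succ r ih =>
    have hle := ih hlh
    rw [remnantAfter_succ, remnantAfter_succ, if_pos self_mem_pathAfter]
    split_ifs with hh
    · exact Nat.sub_le_sub_right hle 1
    · by_contra! hcon
      obtain ⟨g, hlg, hgh, hgpos, hlt⟩ :=
        exists_bottom_lt_of_notMem_pathAfter hlh (by lia) (by lia) hh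
      have hshape : InShape lam h (remnantAfter lam T l r h) :=
        inShape_of_le_remnantAfter (hl.trans hlh) (by lia) le_rfl
      have hg : remnantAfter lam T l r g ≤ remnantAfter lam T l r h := (ih hlg).trans (by lia)
      refine hlt.not_ge ?_
      calc T g (remnantAfter lam T l r g)
          ≤ T g (remnantAfter lam T l r h) := hT.le_of_row_le hgpos hg
            (hshape.of_le (hl.trans hlg) hgh.le hshape.2.1 le_rfl)
        _ ≤ T h (remnantAfter lam T l r h) := hT.le_of_col_le (hl.trans hlg) hgh.le hshape

lemma exists_mem_pathAfter_of_remnantAfter_lt (hy : y ≤ zeta lam h)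
    (hlt : remnantAfter lam T l r h < y) :
    ∃ r' < r, h ∈ pathAfter lam T l r' ∧ remnantAfter lam T l r' h = y := by
  induction r with
  | zero => exact absurd hlt hy.not_gt
  | succ r ih =>
    by_cases hr : remnantAfter lam T l r h < y
    · obtain ⟨r', hr', hpath⟩ := ih hr
      exact ⟨r', hr'.trans r.lt_succ_self, hpath⟩
    · rw [remnantAfter_succ] at hlt
      exact ⟨r, r.lt_succ_self, by grind, by grind⟩

lemma IsSSYT.exists_mem_pathAfter (hT : IsSSYT lam T) (hl : 1 ≤ l) (hlh : l ≤ h)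
    (hy : InShape lam h y) :
    ∃ r < zeta lam l, h ∈ pathAfter lam T l r ∧ remnantAfter lam T l r h = y := by
  refine exists_mem_pathAfter_of_remnantAfter_lt ((inShape_iff_le_zeta hy.1 hy.2.1).1 hy) ?_
  calc remnantAfter lam T l (zeta lam l) h
      ≤ remnantAfter lam T l (zeta lam l) l := hT.remnantAfter_le_self hl _ hlh
    _ = 0 := by rw [remnantAfter_self, Nat.sub_self]
    _ < y := hy.2.1

/-- The columns of `T`. -/
def columns (lam : NPartition n) (T : ℕ → ℕ → ℕ) (j : ℕ) : Finset ℕ :=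
  (Icc 1 (columnLength lam j)).image (T j)

lemma mem_columns : x ∈ columns lam T j ↔ ∃ k, InShape lam j k ∧ T j k = x := by
  simp only [columns, mem_image, mem_Icc_columnLength]

lemma IsSSYT.exists_lt_of_le_remnantAfter_succ (hT : IsSSYT lam T) (hl : 1 ≤ l) (hlh : l ≤ h)
    (hy : 1 ≤ y) (hyr : y ≤ remnantAfter lam T l (r + 1) h) :
    ∃ g y', l ≤ g ∧ g ≤ h ∧ 1 ≤ y' ∧ y' ≤ remnantAfter lam T l r g ∧ T h y < T g y' := by
  rw [remnantAfter_succ] at hyr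
  split_ifs at hyr with hh
  · have hyr' : y + 1 ≤ remnantAfter lam T l r h := by lia
    exact ⟨h, y + 1, hlh, le_rfl, Nat.le_add_left 1 y, hyr', hT.lt_of_row_lt hy y.lt_succ_self
      (inShape_of_le_remnantAfter (hl.trans hlh) (Nat.le_add_left 1 y) hyr')⟩
  · have hpos := hy.trans hyr
    obtain ⟨g, hlg, hgh, hgpos, hlt⟩ := exists_bottom_lt_of_notMem_pathAfter hlh
      (hpos.trans (hT.remnantAfter_le_self hl r hlh)) hpos hh
    exact ⟨g, _, hlg, hgh.le, hgpos, le_rfl, (hT.le_of_row_le hy hyr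
      (inShape_of_le_remnantAfter (hl.trans hlh) hpos le_rfl)).trans_lt hlt⟩

lemma IsSSYT.exists_decreasingIn (hT : IsSSYT lam T) (hl : 1 ≤ l) (hlh : l ≤ h) (hy : 1 ≤ y)
    (hyr : y ≤ remnantAfter lam T l r h) :
    ∃ S, DecreasingIn (columns lam T) l (T h y) S ∧ (∀ b ∈ S, b.1 ≤ h) ∧ #S = r + 1 := by
  have hmem : T h y ∈ columns lam T h :=
    mem_columns.2 ⟨y, inShape_of_le_remnantAfter (hl.trans hlh) hy hyr, rfl⟩
  induction r generalizing h y with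
  | zero => exact ⟨{(h, T h y)}, by constructor <;> simp [hlh, hmem], by simp, by simp⟩
  | succ r ih =>
    obtain ⟨g, y', hlg, hgh, hy', hyr', hlt⟩ :=
      hT.exists_lt_of_le_remnantAfter_succ hl hlh hy hyr
    obtain ⟨S, hS, hcol, hcard⟩ := ih hlg hy' hyr'
      (mem_columns.2 ⟨y', inShape_of_le_remnantAfter (hl.trans hlg) hy' hyr', rfl⟩)
    have hcol' : ∀ b ∈ S, b.1 ≤ h := fun b hb => (hcol b hb).trans hgh
    have hnotMem : (h, T h y) ∉ S := fun hS' => hlt.not_ge (hS.le_letter _ hS')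
    exact ⟨insert (h, T h y) S, hS.insert hlh hmem hlt hcol',
      forall_mem_insert _ _ _ |>.2 ⟨le_rfl, hcol'⟩, by rw [card_insert_of_notMem hnotMem, hcard]⟩

lemma DecreasingIn.card_le_of_mem_pathAfter {C : ℕ → Finset ℕ} {S : Finset (ℕ × ℕ)} {N : ℕ}
    (hS : DecreasingIn C l v S) (hpath : ∀ b ∈ S, ∃ r < N, b.1 ∈ pathAfter lam T l r ∧
      T b.1 (remnantAfter lam T l r b.1) = b.2) : #S ≤ N := by
  rw [← card_range N]
  refine card_le_card_of_forall_subsingleton (fun b r => b.1 ∈ pathAfter lam T l r ∧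
    T b.1 (remnantAfter lam T l r b.1) = b.2) (by simpa using hpath) fun r _ => ?_
  have hcol : ∀ b ∈ S, ∀ b' ∈ S, b.1 ∈ pathAfter lam T l r → b'.1 ∈ pathAfter lam T l r →
      T b.1 (remnantAfter lam T l r b.1) = b.2 → T b'.1 (remnantAfter lam T l r b'.1) = b'.2 →
      b'.1 ≤ b.1 := by
    intro b hb b' hb' hmem hmem' heq heq'
    by_contra! hlt
    have hmono := monotoneOn_bottom_pathColsAux hmem hmem' hlt.le
    exact (hS.lt_of_col_lt b hb b' hb' hlt).not_ge (by simpa only [heq, heq'] using hmono)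
  rintro b ⟨hb, hmem, heq⟩ b' ⟨hb', hmem', heq'⟩
  have hfst : b.1 = b'.1 := le_antisymm (hcol b' hb' b hb hmem' hmem heq' heq)
    (hcol b hb b' hb' hmem hmem' heq heq')
  exact Prod.ext hfst (by rw [← heq, ← heq', hfst])

end Duality

/-! ### Increasing enumeration of a finite set -/

section SortedEntry

variable {m k v : ℕ} {s : Finset ℕ} {e : ℕ → ℕ}

lemma countLT_image (he : Set.InjOn e s) : countLT (s.image e) v = #{a ∈ s | e a < v} := by
  rw [countLT, filter_image, card_image_of_injOn (he.mono (coe_subset.2 (filter_subset _ _)))]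

lemma le_iff_countLT_image_lt (he : StrictMonoOn e (Icc 1 m : Finset ℕ)) (hk : k ∈ Icc 1 m) :
    v ≤ e k ↔ countLT ((Icc 1 m).image e) v < k := by
  rw [countLT_image he.injOn]
  refine ⟨fun hv => ?_, fun hlt => ?_⟩
  · have hsub : {a ∈ Icc 1 m | e a < v} ⊆ Icc 1 (k - 1) := fun a ha => by
      rw [mem_filter] at ha
      have hak : a < k := (he.lt_iff_lt (mem_coe.2 ha.1) (mem_coe.2 hk)).1 (ha.2.trans_le hv)
      grind
    have hcard := card_le_card hsub
    rw [Nat.card_Icc] at hcard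
    grind
  · by_contra! hv
    have hsub : Icc 1 k ⊆ {a ∈ Icc 1 m | e a < v} := fun a ha => by
      have ham : a ∈ Icc 1 m := by grind
      exact mem_filter.2
        ⟨ham, ((he.le_iff_le (mem_coe.2 ham) (mem_coe.2 hk)).2 (mem_Icc.1 ha).2).trans_lt hv⟩
    have hcard := card_le_card hsub
    rw [Nat.card_Icc] at hcard
    lia

/-- The `k`-th smallest element of `s`, counted from `1`; junk value `0` if there is none. -/
def sortedEntry (s : Finset ℕ) (k : ℕ) : ℕ := (s.sort (· ≤ ·)).getD (k - 1) 0

lemma strictMonoOn_sortedEntry (s : Finset ℕ) :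
    StrictMonoOn (sortedEntry s) (Icc 1 #s : Finset ℕ) := by
  intro a ha b hb hab
  simp only [coe_Icc, Set.mem_Icc] at ha hb
  have hlen := s.length_sort (· ≤ ·)
  rw [sortedEntry, sortedEntry, List.getD_eq_getElem _ _ (by lia),
    List.getD_eq_getElem _ _ (by lia)]
  exact (Finset.sortedLT_sort s).strictMono_get (Fin.mk_lt_mk.2 (by lia))

lemma image_sortedEntry (s : Finset ℕ) : (Icc 1 #s).image (sortedEntry s) = s := by
  refine eq_of_subset_of_card_le (image_subset_iff.2 fun k hk => ?_) ?_
  · have hlen := s.length_sort (· ≤ ·)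
    rw [sortedEntry, List.getD_eq_getElem _ _ (by grind)]
    exact (mem_sort _).1 (List.getElem_mem _)
  · rw [card_image_of_injOn (strictMonoOn_sortedEntry s).injOn, Nat.card_Icc,
      Nat.add_sub_cancel]

lemma le_sortedEntry_iff (hk : k ∈ Icc 1 #s) : v ≤ sortedEntry s k ↔ countLT s v < k := by
  rw [le_iff_countLT_image_lt (strictMonoOn_sortedEntry s) hk, image_sortedEntry]

end SortedEntry

/-! ### Demazure sets and `A`-sets -/

section ASet

variable {n : ℕ} {lam : NPartition n} {T : ℕ → ℕ → ℕ} {k l v : ℕ} {p : ℕ → ℕ}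

lemma le_keyTab_iff (hp : IsNPerm n p) (hk : InShape lam l k) :
    v ≤ keyTab lam p l k ↔ zeta lam l < k + countGE p (zeta lam l) v := by
  have hinj : Set.InjOn p (Icc 1 (zeta lam l) : Finset ℕ) := hp.injOn.mono <| by
    rw [coe_Icc]
    exact Set.Icc_subset_Icc_right (zeta_le lam)
  have hcard : #((Icc 1 (zeta lam l)).image p) = zeta lam l := by
    rw [card_image_of_injOn hinj, Nat.card_Icc, Nat.add_sub_cancel]
  have hmem : k ∈ Icc 1 #((Icc 1 (zeta lam l)).image p) :=
    mem_Icc.2 ⟨hk.2.1, hcard.symm ▸ (inShape_iff_le_zeta hk.1 hk.2.1).1 hk⟩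
  have hcount : countLT ((Icc 1 (zeta lam l)).image p) v + countGE p (zeta lam l) v =
      zeta lam l := by
    rw [countLT_image hinj, countGE]
    simpa using card_filter_add_card_filter_not (s := Icc 1 (zeta lam l)) (p · < v)
  rw [keyTab, if_pos hk]
  refine (le_sortedEntry_iff hmem).trans ?_
  lia

lemma IsSSYT.le_south_sub_one (hT : IsSSYT lam T) (hk : InShape lam l k) :
    T l k ≤ south lam T l k - 1 := by
  rw [south]
  split_ifs with hsouth
  · exact Nat.le_sub_one_of_lt (hT.2.2 l k hsouth)
  · exact (hT.1 l k hk).2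

lemma IsSSYT.le_east (hT : IsSSYT lam T) (hk : InShape lam l k) : T l k ≤ east lam T l k := by
  rw [east]
  split_ifs with heast
  · exact hT.2.1 l k heast
  · exact (hT.1 l k hk).2

lemma IsSSYT.mem_Aset_iff (hT : IsSSYT lam T) (hk : InShape lam l k) :
    T l k ∈ Aset lam T p l k ↔ ∀ h, l ≤ h → 0 < remnantAfter lam T l (zeta lam l - k) h →
      T h (remnantAfter lam T l (zeta lam l - k) h) ≤ keyTab lam p l k := by
  have hpos := (hT.1 l k hk).1
  have hself : remnantAfter lam T l (zeta lam l - k) l = k := by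
    rw [remnantAfter_self, Nat.sub_sub_self ((inShape_iff_le_zeta hk.1 hk.2.1).1 hk)]
  have heast : mEast T (remnant lam T l k) (lam.part 1) l ≤ keyTab lam p l k ↔
      1 ≤ keyTab lam p l k ∧ ∀ h, l < h → 0 < remnantAfter lam T l (zeta lam l - k) h →
        T h (remnantAfter lam T l (zeta lam l - k) h) ≤ keyTab lam p l k :=
    mEast_le_iff.trans <| and_congr_right fun _ => forall₂_congr fun h _ =>
      ⟨fun H hh => H (le_part_one_of_remnantAfter_pos hh) hh, fun H _ => H⟩
  have hmem : T l k ∈ Aset lam T p l k ↔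
      mEast T (remnant lam T l k) (lam.part 1) l ≤ keyTab lam p l k ∧
        T l k ≤ keyTab lam p l k := by
    rw [Aset]
    split_ifs with hm
    · simp [hm]
    · simp [not_lt.1 hm, hT.row_le_entry hk, hT.le_south_sub_one hk, hT.le_east hk]
  rw [hmem, heast]
  refine ⟨fun H h hlh hh => ?_, fun H => ?_⟩
  · obtain rfl | hlt := hlh.eq_or_lt
    · exact hself.symm ▸ H.2
    · exact H.1.2 h hlt hh
  · have hle := H l le_rfl (hself.symm ▸ hk.2.1)
    rw [hself] at hle
    exact ⟨⟨hpos.trans hle, fun h hlh => H h hlh.le⟩, hle⟩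

lemma IsSSYT.mem_Aset_of_inDemazure (hT : IsSSYT lam T) (hp : IsNPerm n p)
    (hD : InDemazure (columnLength lam) (columns lam T) p) (hk : InShape lam l k) :
    T l k ∈ Aset lam T p l k := by
  refine (hT.mem_Aset_iff hk).2 fun h hlh hh => (le_keyTab_iff hp hk).2 ?_
  obtain ⟨S, hS, -, hcard⟩ := hT.exists_decreasingIn hk.1 hlh hh le_rfl
  have hle := hD l hk.1 _ S hS
  rw [columnLength_of_pos lam hk.1] at hle
  lia

lemma IsSSYT.inDemazure_of_forall_mem_Aset (hT : IsSSYT lam T) (hp : IsNPerm n p)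
    (hA : ∀ l k, InShape lam l k → T l k ∈ Aset lam T p l k) :
    InDemazure (columnLength lam) (columns lam T) p := by
  intro l hl v S hS
  rw [columnLength_of_pos lam hl]
  refine hS.card_le_of_mem_pathAfter (lam := lam) (T := T) fun b hb => ?_
  have hlb := hS.le_col b hb
  obtain ⟨y, hy, hby⟩ := mem_columns.1 (hS.mem b hb)
  obtain ⟨r, hr, hpath, hry⟩ := hT.exists_mem_pathAfter hl hlb hy
  refine ⟨r, ?_, hpath, hry.symm ▸ hby⟩
  have hk : InShape lam l (zeta lam l - r) :=
    (inShape_iff_le_zeta hl (by lia)).2 (Nat.sub_le _ _)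
  have hkey : b.2 ≤ keyTab lam p l (zeta lam l - r) := by
    have hle := (hT.mem_Aset_iff hk).1 (hA l _ hk) b.1 hlb
    rw [Nat.sub_sub_self hr.le, hry, hby] at hle
    exact hle hy.2.1
  have hcount := (le_keyTab_iff hp hk).1 ((hS.le_letter b hb).trans hkey)
  lia

lemma IsSSYT.inDemazure_columns_iff (hT : IsSSYT lam T) (hp : IsNPerm n p) :
    InDemazure (columnLength lam) (columns lam T) p ↔
      ∀ l k, InShape lam l k → T l k ∈ Aset lam T p l k :=
  ⟨fun hD _ _ => hT.mem_Aset_of_inDemazure hp hD, hT.inDemazure_of_forall_mem_Aset hp⟩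

end ASet

/-! ### Fillings and sequences of columns -/

section Columns

variable {n : ℕ} {lam : NPartition n} {T T' : ℕ → ℕ → ℕ} {j k v : ℕ} {p : ℕ → ℕ}
  {C : ℕ → Finset ℕ}

lemma IsSSYT.le_entry_iff (hT : IsSSYT lam T) (hk : InShape lam j k) :
    v ≤ T j k ↔ countLT (columns lam T j) v < k :=
  le_iff_countLT_image_lt (hT.strictMonoOn j) ((mem_Icc_columnLength lam).2 hk)

lemma IsSSYT.card_columns (hT : IsSSYT lam T) (j : ℕ) :
    #(columns lam T j) = columnLength lam j := by
  rw [columns, card_image_of_injOn (hT.strictMonoOn j).injOn, Nat.card_Icc, Nat.add_sub_cancel]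

lemma IsSSYT.countLT_columns_succ_le (hT : IsSSYT lam T) (hj : 1 ≤ j) (v : ℕ) :
    countLT (columns lam T (j + 1)) v ≤ countLT (columns lam T j) v := by
  by_contra! hlt
  have hcard : countLT (columns lam T (j + 1)) v ≤ columnLength lam (j + 1) :=
    (card_filter_le _ _).trans_eq (hT.card_columns _)
  have hk : InShape lam (j + 1) (countLT (columns lam T j) v + 1) :=
    (mem_Icc_columnLength lam).1 (mem_Icc.2 ⟨Nat.le_add_left 1 _, hlt.trans_le hcard⟩)
  have hv := (hT.le_entry_iff (hk.of_le hj j.le_succ hk.2.1 le_rfl)).2 (Nat.lt_succ_self _)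
  exact (Nat.lt_succ_iff.1 ((hT.le_entry_iff hk).1 (hv.trans (hT.2.1 j _ hk)))).not_gt hlt

lemma IsSSYT.isColumnTableau_columns (hT : IsSSYT lam T) :
    IsColumnTableau n (lam.part 1) (columnLength lam) (columns lam T) where
  subset j x hx := by
    obtain ⟨k, hk, rfl⟩ := mem_columns.1 hx
    exact mem_Icc.2 (hT.1 j k hk)
  card_eq := hT.card_columns
  countLT_le _ hj := hT.countLT_columns_succ_le hj
  emptyBeyond j hj := by simp [columns, columnLength_eq_zero lam hj]

lemma IsSSYT.weight_eq (hT : IsSSYT lam T) :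
    weight lam T = columnWeight (lam.part 1) (columns lam T) := by
  have hcolumn (j : ℕ) :
      ∏ x ∈ columns lam T j, (X x : Poly) = ∏ k ∈ Icc 1 (columnLength lam j), X (T j k) :=
    prod_image (hT.strictMonoOn j).injOn
  simp only [weight, columnWeight, hcolumn]
  refine prod_finset_product' (f := fun j k => (X (T j k) : Poly)) _ _ _ fun b => ?_
  rw [mem_Icc_columnLength]
  simp only [boxes, mem_filter, mem_product, mem_Icc, mem_range, InShape]
  grind [lam.antitone (i := 1) (j := b.2) le_rfl]

lemma IsSSYT.eq_of_columns_eq (hT : IsSSYT lam T) (hT' : IsSSYT lam T')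
    (hzero : ZeroOutside lam T) (hzero' : ZeroOutside lam T')
    (heq : columns lam T = columns lam T') : T = T' := by
  funext j k
  by_cases hk : InShape lam j k
  · exact eq_of_forall_le_iff fun v => by rw [hT.le_entry_iff hk, hT'.le_entry_iff hk, heq]
  · rw [hzero j k hk, hzero' j k hk]

/-- The filling of `λ` whose `j`-th column lists `C j` increasingly. -/
def ofColumns (lam : NPartition n) (C : ℕ → Finset ℕ) (j k : ℕ) : ℕ :=
  if InShape lam j k then sortedEntry (C j) k else 0

lemma zeroOutside_ofColumns (lam : NPartition n) (C : ℕ → Finset ℕ) :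
    ZeroOutside lam (ofColumns lam C) := fun _ _ hk => if_neg hk

lemma columns_ofColumns (hC : ∀ j, #(C j) = columnLength lam j) :
    columns lam (ofColumns lam C) = C := by
  funext j
  calc columns lam (ofColumns lam C) j = (Icc 1 #(C j)).image (sortedEntry (C j)) := by
        rw [hC]
        exact image_congr fun k hk => if_pos ((mem_Icc_columnLength lam).1 hk)
    _ = C j := image_sortedEntry (C j)

lemma IsColumnTableau.ofColumns_le_succ
    (hC : IsColumnTableau n (lam.part 1) (columnLength lam) C) (hk : InShape lam (j + 1) k) :
    ofColumns lam C j k ≤ ofColumns lam C (j + 1) k := by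
  obtain rfl | hj := j.eq_zero_or_pos
  · rw [zeroOutside_ofColumns lam C 0 k fun h => Nat.not_succ_le_zero 0 h.1]
    exact Nat.zero_le _
  have hk' := hk.of_le hj j.le_succ hk.2.1 le_rfl
  have hmem (g : ℕ) (hg : InShape lam g k) : k ∈ Icc 1 #(C g) := by
    rwa [hC.card_eq, mem_Icc_columnLength]
  rw [ofColumns, ofColumns, if_pos hk, if_pos hk', le_sortedEntry_iff (hmem _ hk)]
  exact (hC.countLT_le j hj _).trans_lt ((le_sortedEntry_iff (hmem _ hk')).1 le_rfl)

lemma IsColumnTableau.isSSYT_ofColumns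
    (hC : IsColumnTableau n (lam.part 1) (columnLength lam) C) : IsSSYT lam (ofColumns lam C) := by
  have hrange : ∀ j k, InShape lam j k → 1 ≤ ofColumns lam C j k ∧ ofColumns lam C j k ≤ n := by
    intro j k hk
    have hmem : ofColumns lam C j k ∈ columns lam (ofColumns lam C) j :=
      mem_columns.2 ⟨k, hk, rfl⟩
    rw [columns_ofColumns hC.card_eq] at hmem
    exact mem_Icc.1 (hC.subset j hmem)
  refine ⟨hrange, fun j k hk => hC.ofColumns_le_succ hk, fun j k hk => ?_⟩
  obtain rfl | hpos := k.eq_zero_or_pos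
  · rw [zeroOutside_ofColumns lam C j 0 fun h => Nat.not_succ_le_zero 0 h.2.1]
    exact (hrange j _ hk).1
  · have hk' := hk.of_le hk.1 le_rfl hpos k.le_succ
    rw [ofColumns, ofColumns, if_pos hk, if_pos hk']
    refine strictMonoOn_sortedEntry (C j) ?_ ?_ k.lt_succ_self <;>
      rwa [hC.card_eq, mem_coe, mem_Icc_columnLength]

lemma bijOn_columns (hp : IsNPerm n p) :
    Set.BijOn (columns lam)
      {T | IsSSYT lam T ∧ ZeroOutside lam T ∧
        ∀ l k, InShape lam l k → T l k ∈ Aset lam T p l k}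
      {C | IsColumnTableau n (lam.part 1) (columnLength lam) C ∧
        InDemazure (columnLength lam) C p} := by
  refine ⟨fun T hT => ⟨hT.1.isColumnTableau_columns, ?_⟩, fun T hT T' hT' => ?_, fun C hC => ?_⟩
  · exact (hT.1.inDemazure_columns_iff hp).2 hT.2.2
  · exact hT.1.eq_of_columns_eq hT'.1 hT.2.1 hT'.2.1
  · have hcolumns := columns_ofColumns hC.1.card_eq
    have hSSYT := hC.1.isSSYT_ofColumns
    refine ⟨ofColumns lam C, ⟨hSSYT, zeroOutside_ofColumns lam C, ?_⟩, hcolumns⟩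
    rw [← hSSYT.inDemazure_columns_iff hp, hcolumns]
    exact hC.2

end Columns

end KeyPoly

namespace KeyPoly

/-- Corollary 10.2(i).  For any reduced word for `π`, the
Demazure polynomial `d_λ(π;x) = ρ_{i_t} ⋯ ρ_{i_1} . x^λ` is the sum of the
weight monomials of the tableaux all of whose entries lie in the `A`-sets. -/
theorem demazure_eq_sum_Aset (n : ℕ) (hn : 1 ≤ n) (lam : NPartition n)
    (p : ℕ → ℕ) (hp : IsNPerm n p) (w : List ℕ) (hw : IsReducedWord n w p) :
    applyOps rhoOp w (lamMonomial lam) =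
      ∑ᶠ T ∈ {T : ℕ → ℕ → ℕ | IsSSYT lam T ∧ ZeroOutside lam T ∧
          ∀ l k, InShape lam l k → T l k ∈ Aset lam T p l k},
        weight lam T := by
  calc applyOps rhoOp w (lamMonomial lam)
      = demazureSum n (lam.part 1) (columnLength lam) p := hw.applyOps_lamMonomial lam
    _ = ∑ᶠ C ∈ {C | IsColumnTableau n (lam.part 1) (columnLength lam) C ∧
          InDemazure (columnLength lam) C p}, columnWeight (lam.part 1) C := by
      rw [demazureSum, ← finsum_mem_coe_finset]
      simp only [Finset.coe_filter, mem_columnTableaux]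
    _ = _ := (finsum_mem_eq_of_bijOn (columns lam) (bijOn_columns hp) fun _ hT =>
      hT.1.weight_eq).symm

end KeyPoly
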